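/- arXiv:2003.10139 — 2 statements merged into one kernel-verified Lean document; each statement's English description precedes it below -/
import Mathlib

section
/- For every integer k ≥ 3, if G is a C_{2k}-free graph with Δ(G) ≥ 1, then the strong clique number of G is at most (2k−1)Δ(G) + (2k−1)². -/
/-- A strong clique of `G`: a set of edges of `G` such that every pair of edges
either shares an endpoint or is joined by an edge of `G`. -/
def IsStrongClique {V : Type*} (G : SimpleGraph V) (S : Set (Sym2 V)) : Prop :=
  S ⊆ G.edgeSet ∧
    ∀ e ∈ S, ∀ f ∈ S, ∃ a b, a ∈ e ∧ b ∈ f ∧ (a = b ∨ G.Adj a b)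

/-- `G` contains no cycle of length `n`. -/
def CycleFree {V : Type*} (G : SimpleGraph V) (n : ℕ) : Prop :=
  ∀ (v : V) (c : G.Walk v v), c.IsCycle → c.length ≠ n


/-! ### Letters -/

/-- A letter: first component tells whether the position is bi, the second the kind. -/
abbrev Lt := Bool × Bool

namespace Lt
abbrev O : Lt := (false, false)
abbrev I : Lt := (false, true)
abbrev R : Lt := (true, false)
abbrev L : Lt := (true, true)

def lv : Lt → ℤ
  | (false, false) => 0
  | (false, true) => 1
  | (true, false) => -1
  | (true, true) => 0
def rv : Lt → ℤ
  | (false, false) => 0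
  | (false, true) => 1
  | (true, false) => 0
  | (true, true) => -1
def bv (a : Lt) : ℤ := if a.1 then 1 else 0
/-- joint contribution at a shared vertex -/
def J (p q : Lt) : ℤ := (if p.2 = q.2 then 0 else 1) - bv p
def flip (p : Lt) : Lt := if p.1 then (p.1, !p.2) else p
end Lt

def nb (a b : Bool) : ℤ := if a = b then 0 else 1

open Lt in
/-- Constraints satisfied by an extremal cycle. -/
structure Cfg {κ : Type*} (t : ℤ) (w : κ → ℤ → Lt) (σ : κ → ℤ → Bool) : Prop where
  ht : 3 ≤ t
  per : ∀ f i, w f (i + t) = w f i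
  pers : ∀ f i, σ f (i + t) = σ f i
  same : ∀ f g i, (w f i).1 = (w g i).1
  c1 : ∀ f i, nb (σ f i) (σ f (i+1)) + rv (w f i) + lv (w f (i+1)) ≠ 1
  c1' : ∀ f i, nb (σ f i) (σ f (i+1)) + rv (w f i) + lv (w f (i+1)) ≠ -1
  c2 : ∀ f i, nb (σ f i) (σ f (i+2)) + rv (w f i) + lv (w f (i+2)) ≠ 2 + bv (w f (i+1))
  c3 : 4 ≤ t → ∀ f i, nb (σ f i) (σ f (i+3)) + rv (w f i) + lv (w f (i+3))
    ≠ 3 + bv (w f (i+1)) + bv (w f (i+2))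
  c4 : ∀ f g, f ≠ g → ∀ i, nb (σ f i) (σ f (i+1)) + rv (w f i)
    + (nb (σ g (i+1)) (σ g (i+2)) + lv (w g (i+2))) + J (w f (i+1)) (w g (i+1)) ≠ 0
  c4f : ∀ f g, f ≠ g → ∀ i j, i + 2 ≤ j → j + 2 ≤ i + t →
    nb (σ f i) (σ f (i+1)) + rv (w f i) + lv (w f (i+1))
    + (nb (σ g j) (σ g (j+1)) + rv (w g j) + lv (w g (j+1))) ≠ 0
  c5 : 4 ≤ t → ∀ f g, f ≠ g → ∀ i, nb (σ f i) (σ f (i+1)) + rv (w f i)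
    + (nb (σ g (i+1)) (σ g (i+3)) + lv (w g (i+3))) + J (w f (i+1)) (w g (i+1))
    ≠ 1 + bv (w g (i+2))
  c5' : 4 ≤ t → ∀ f g, f ≠ g → ∀ i, nb (σ g i) (σ g (i+2)) + rv (w g i)
    + (nb (σ f (i+2)) (σ f (i+3)) + lv (w f (i+3))) + J (w g (i+2)) (w f (i+2))
    ≠ 1 + bv (w f (i+1))

theorem nb_comm (a b : Bool) : nb a b = nb b a := by revert a b; decide

namespace Cfg
open Lt
variable {κ : Type*} {t : ℤ} {w : κ → ℤ → Lt} {σ : κ → ℤ → Bool}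

theorem lv_flip (a : Lt) : lv (flip a) = rv a := by revert a; decide
theorem rv_flip (a : Lt) : rv (flip a) = lv a := by revert a; decide
theorem bv_flip (a : Lt) : bv (flip a) = bv a := by revert a; decide
theorem J_flip (a b : Lt) (h : a.1 = b.1) : J (flip a) (flip b) = J b a := by
  revert a b; decide

theorem mirror (h : Cfg t w σ) : Cfg t (fun f i => flip (w f (-i))) (fun f i => σ f (-i)) where
  ht := h.ht
  per f i := by
    have := h.per f (-(i+t)); rw [← this]; congr 2; ring
  pers f i := by
    have := h.pers f (-(i+t)); rw [← this]; congr 1; ring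
  same f g i := by
    have := h.same f g (-i)
    revert this; generalize w f (-i) = a; generalize w g (-i) = b; revert a b; decide
  c1 f i := by
    have := h.c1 f (-(i+1))
    rw [show -(i+1)+1 = -i by ring] at this
    rw [nb_comm, lv_flip, rv_flip]; omega
  c1' f i := by
    have := h.c1' f (-(i+1))
    rw [show -(i+1)+1 = -i by ring] at this
    rw [nb_comm, lv_flip, rv_flip]; omega
  c2 f i := by
    have := h.c2 f (-(i+2))
    rw [show -(i+2)+2 = -i by ring, show -(i+2)+1 = -(i+1) by ring] at this
    rw [nb_comm, lv_flip, rv_flip, bv_flip]; omega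
  c3 h4 f i := by
    have := h.c3 h4 f (-(i+3))
    rw [show -(i+3)+3 = -i by ring, show -(i+3)+1 = -(i+2) by ring,
      show -(i+3)+2 = -(i+1) by ring] at this
    rw [nb_comm, lv_flip, rv_flip, bv_flip, bv_flip]; omega
  c4 f g hfg i := by
    have := h.c4 g f hfg.symm (-(i+2))
    rw [show -(i+2)+2 = -i by ring, show -(i+2)+1 = -(i+1) by ring] at this
    rw [nb_comm (σ f _), nb_comm (σ g _), lv_flip, rv_flip, J_flip _ _ (h.same _ _ _)]; omega
  c4f f g hfg i j h1 h2 := by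
    have := h.c4f g f hfg.symm (-(j+1)) (-(i+1)) (by omega) (by omega)
    rw [show -(j+1)+1 = -j by ring, show -(i+1)+1 = -i by ring] at this
    rw [nb_comm (σ f _), nb_comm (σ g _), lv_flip, rv_flip, lv_flip, rv_flip]; omega
  c5 h4 f g hfg i := by
    have := h.c5' h4 f g hfg (-(i+3))
    rw [show -(i+3)+3 = -i by ring, show -(i+3)+1 = -(i+2) by ring,
      show -(i+3)+2 = -(i+1) by ring] at this
    rw [nb_comm (σ f _), nb_comm (σ g _), lv_flip, rv_flip, bv_flip, J_flip _ _ (h.same _ _ _)]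
    have e : bv (w f (-(i+2))) = bv (w g (-(i+2))) := by simp [bv, h.same f g]
    omega
  c5' h4 f g hfg i := by
    have := h.c5 h4 f g hfg (-(i+3))
    rw [show -(i+3)+3 = -i by ring, show -(i+3)+1 = -(i+2) by ring,
      show -(i+3)+2 = -(i+1) by ring] at this
    rw [nb_comm (σ f _), nb_comm (σ g _), lv_flip, rv_flip, bv_flip, J_flip _ _ (h.same _ _ _)]
    have e : bv (w f (-(i+1))) = bv (w g (-(i+1))) := by simp [bv, h.same f g]
    omega

/-- value of a gap, minus one -/
def val (w : κ → ℤ → Lt) (σ : κ → ℤ → Bool) (f : κ) (i : ℤ) : ℤ :=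
  nb (σ f i) (σ f (i+1)) + rv (w f i) + lv (w f (i+1))

/-- adjacent gaps, additive case -/
theorem adj (h : Cfg t w σ) {f g : κ} (hfg : f ≠ g) (i : ℤ)
    (hJ : J (w f (i+1)) (w g (i+1)) = lv (w f (i+1)) + rv (w g (i+1))) :
    val w σ f i + val w σ g (i+1) ≠ 0 := by
  have := h.c4 f g hfg i
  unfold val
  rw [show i+1+1 = i+2 by ring]
  omega

theorem far (h : Cfg t w σ) {f g : κ} (hfg : f ≠ g) (i j : ℤ) (h1 : i + 2 ≤ j)
    (h2 : j + 2 ≤ i + t) : val w σ f i + val w σ g j ≠ 0 := h.c4f f g hfg i j h1 h2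

/-- table of values of a gap -/
def tab (a b : Lt) (v : ℤ) : Bool :=
  if a = L ∧ b = R then v = -2
  else if (a = I ∧ (b = O ∨ b = L)) ∨ (b = I ∧ (a = O ∨ a = R)) then v = 2
  else if a = I ∧ b = I then v = 2 ∨ v = 3
  else v = 0

theorem tab_aux : ∀ (a b : Lt) (s s' : Bool),
    nb s s' + rv a + lv b ≠ 1 → nb s s' + rv a + lv b ≠ -1 →
    tab a b (nb s s' + rv a + lv b) = true := by decide

theorem val_tab (h : Cfg t w σ) (f : κ) (i : ℤ) : tab (w f i) (w f (i+1)) (val w σ f i) = true :=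
  tab_aux _ _ _ _ (h.c1 f i) (h.c1' f i)

/-- forbidden triples -/
def bad3 (a b c : Lt) : Bool :=
  (a = I ∧ b = O ∧ c ≠ R) ∨ (c = I ∧ b = O ∧ a ≠ L) ∨ (a = I ∧ c = I ∧ b.1)

theorem bad3_aux : ∀ (a b c : Lt) (s s' s'' : Bool),
    nb s s' + rv a + lv b ≠ 1 → nb s s' + rv a + lv b ≠ -1 →
    nb s' s'' + rv b + lv c ≠ 1 → nb s' s'' + rv b + lv c ≠ -1 →
    nb s s'' + rv a + lv c ≠ 2 + bv b → bad3 a b c = false := by decide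

theorem not_bad3 (h : Cfg t w σ) (f : κ) (i : ℤ) :
    bad3 (w f i) (w f (i+1)) (w f (i+2)) = false := by
  have h1 := h.c1 f (i+1)
  have h1' := h.c1' f (i+1)
  rw [show i+1+1 = i+2 by ring] at h1 h1'
  exact bad3_aux _ _ _ _ _ _ (h.c1 f i) (h.c1' f i) h1 h1' (h.c2 f i)

theorem RII_aux : ∀ (s0 s1 s2 : Bool), 
    nb s0 s1 + rv R + lv I ≠ 1 → nb s0 s1 + rv R + lv I ≠ -1 →
    nb s1 s2 + rv I + lv I ≠ 1 → nb s1 s2 + rv I + lv I ≠ -1 →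
    nb s0 s2 + rv R + lv I ≠ 2 + bv I → nb s0 s2 = 0 := by decide

theorem val_per (h : Cfg t w σ) (f : κ) (i : ℤ) : val w σ f (i+t) = val w σ f i := by
  unfold val
  rw [show i+t+1 = i+1+t by ring, h.per, h.per, h.pers, h.pers]

theorem lt_cases : ∀ a : Lt, a = O ∨ a = I ∨ a = R ∨ a = L := by decide

theorem tabR {q : Lt} {v : ℤ} (h : tab R q v = true) : (q = I ∧ v = 2) ∨ (q ≠ I ∧ v = 0) := by
  rcases lt_cases q with rfl | rfl | rfl | rfl <;> simpa [tab] using h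
theorem tab_R {p : Lt} {v : ℤ} (h : tab p R v = true) : (p = L ∧ v = -2) ∨ (p ≠ L ∧ v = 0) := by
  rcases lt_cases p with rfl | rfl | rfl | rfl <;> simpa [tab] using h
theorem tabL {q : Lt} {v : ℤ} (h : tab L q v = true) : (q = R ∧ v = -2) ∨ (q ≠ R ∧ v = 0) := by
  rcases lt_cases q with rfl | rfl | rfl | rfl <;> simpa [tab] using h
theorem tab_L {p : Lt} {v : ℤ} (h : tab p L v = true) : (p = I ∧ v = 2) ∨ (p ≠ I ∧ v = 0) := by
  rcases lt_cases p with rfl | rfl | rfl | rfl <;> simpa [tab] using h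

theorem Jadd : ∀ p q : Lt, p.1 = q.1 → ¬ (p = I ∧ q = I) → ¬ (p = R ∧ q = L) →
    J p q = lv p + rv q := by decide

theorem adj' (h : Cfg t w σ) {f g : κ} (hfg : f ≠ g) (i : ℤ)
    (h1 : ¬ (w f (i+1) = I ∧ w g (i+1) = I)) (h2 : ¬ (w f (i+1) = R ∧ w g (i+1) = L)) :
    val w σ f i + val w σ g (i+1) ≠ 0 :=
  h.adj hfg i (Jadd _ _ (h.same _ _ _) h1 h2)

theorem vt (h : Cfg t w σ) (f : κ) (i j : ℤ) (hj : i + 1 = j) :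
    tab (w f i) (w f j) (val w σ f i) = true := by subst hj; exact h.val_tab f i

/-- distance-two sum, with the wrap-around when `t = 3` -/
theorem dist2 (h : Cfg t w σ) {f g : κ} (hfg : f ≠ g) (i : ℤ)
    (h1 : t = 3 → ¬ (w g i = I ∧ w f i = I)) (h2 : t = 3 → ¬ (w g i = R ∧ w f i = L)) :
    val w σ f i + val w σ g (i+2) ≠ 0 := by
  by_cases h4 : 4 ≤ t
  · exact h.far hfg i (i+2) (by omega) (by omega)
  · have ht : t = 3 := by have := h.ht; omega
    have e : ∀ f, w f (i+2+1) = w f i := fun f => by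
      rw [← h.per f i]; congr 1; omega
    have := h.adj' hfg.symm (i+2) (by rw [e, e]; exact h1 ht) (by rw [e, e]; exact h2 ht)
    rw [show i+2+1 = i+t by omega, h.val_per] at this
    omega

theorem caseb (h : Cfg t w σ) {f g : κ} (hfg : f ≠ g) (i : ℤ)
    (f1 : w f (i+1) = L) (g1 : w g (i+1) = L) (f2 : w f (i+2) = R) (g2 : w g (i+2) = R) :
    False := by
  have aux : ∀ {f g : κ}, f ≠ g → w f (i+1) = L → w g (i+1) = L → w f (i+2) = R →
      w g (i+2) = R → (w f i ≠ I ∧ val w σ f i = 0) ∧ val w σ f (i+2) = 0 := by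
    intro f g hfg f1 g1 f2 g2
    have a0 := h.vt f i _ rfl
    have a2 := h.vt f (i+2) _ rfl
    have b1 := h.vt g (i+1) (i+2) (by ring)
    rw [f1] at a0; rw [f2] at a2; rw [g1, g2] at b1
    have a0 := tab_L a0
    have a2 := tabR a2
    have b1 : val w σ g (i+1) = -2 := by simpa using tabL b1
    have s1 := h.adj' hfg i (by simp [f1]) (by simp [f1])
    have s2 := h.adj' hfg.symm (i+1) (by rw [show i+1+1=i+2 by ring]; simp [f2])
      (by rw [show i+1+1=i+2 by ring]; simp [f2])
    rw [show i+1+1=i+2 by ring] at s2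
    refine ⟨?_, ?_⟩
    · rcases a0 with a0 | a0
      · omega
      · exact a0
    · omega
  obtain ⟨⟨p1, p2⟩, p3⟩ := aux hfg f1 g1 f2 g2
  obtain ⟨⟨q1, q2⟩, q3⟩ := aux hfg.symm g1 f1 g2 f2
  by_cases hh : w g i = R ∧ w f i = L
  · have := h.dist2 hfg.symm i (by simp [p1]) (by simp [hh])
    omega
  · have := h.dist2 hfg i (by simp [p1]) (fun _ => hh)
    omega

theorem ORI_aux : ∀ s0 s1 s2 : Bool, nb s0 s1 + rv O + lv R ≠ 1 → nb s0 s1 + rv O + lv R ≠ -1 →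
    nb s1 s2 + rv R + lv I ≠ 1 → nb s1 s2 + rv R + lv I ≠ -1 →
    nb s2 s0 + rv I + lv O ≠ 1 → nb s2 s0 + rv I + lv O ≠ -1 → False := by decide

theorem casea (h : Cfg t w σ) {f g : κ} (hfg : f ≠ g) (i : ℤ)
    (f1 : w f (i+1) = R) (g1 : w g (i+1) = R) (f2 : w f (i+2) = I) (g2 : w g (i+2) = I)
    (f0 : w f i ≠ L) (g0 : w g i ≠ L) : False := by
  have F0 : val w σ f i = 0 := by
    have := h.vt f i _ rfl
    rw [f1] at this
    simpa [f0] using tab_R this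
  have G0 : val w σ g i = 0 := by
    have := h.vt g i _ rfl
    rw [g1] at this
    simpa [g0] using tab_R this
  have f0' : w f i ≠ I := by
    intro e; have := h.not_bad3 f i; rw [e, f1, f2] at this; revert this; decide
  have g0' : w g i ≠ I := by
    intro e; have := h.not_bad3 g i; rw [e, g1, g2] at this; revert this; decide
  have hs := h.same f g i
  have hs3 := h.same f g (i+3)
  by_cases h4 : 4 ≤ t
  · -- next letter
    have key : ∀ {f g : κ}, f ≠ g → val w σ f i = 0 → val w σ g i = 0 → w f (i+1) = R →
        w g (i+1) = R → w f (i+2) = I → w g (i+2) = I → w f i ≠ L → w f i ≠ I →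
        (w f i).1 = (w g i).1 → w g i ≠ L → w g i ≠ I → w f (i+3) = L := by
      intro f g hfg F0 G0 f1 g1 f2 g2 f0 f0' hs g0 g0'
      rcases lt_cases (w f (i+3)) with e | e | e | e
      · exfalso
        have b := h.not_bad3 f (i+2)
        rw [f2, show i+2+1 = i+3 by ring, e] at b
        have e4 : w f (i+4) = R := by
          rw [show i+2+2 = i+4 by ring] at b
          revert b; generalize w f (i+4) = q; revert q; decide
        have a := h.vt f (i+3) (i+4) (by ring)
        rw [e, e4] at a
        have a : val w σ f (i+3) = 0 := by simpa using tab_R a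
        by_cases h5 : 5 ≤ t
        · have := h.far hfg.symm i (i+3) (by omega) (by omega)
          omega
        · have ht : t = 4 := by omega
          have e4' : ∀ f, w f (i+4) = w f i := fun f => by rw [← h.per f i, ht]
          have := h.adj' hfg (i+3)
            (by rw [show i+3+1 = i+4 by ring, e4]; simp)
            (by rw [show i+3+1 = i+4 by ring, e4' g]; simp [g0])
          rw [show i+3+1 = i+t by omega, h.val_per] at this
          omega
      · exfalso
        have := h.c5 h4 g f hfg.symm i
        have s : nb (σ f (i+1)) (σ f (i+3)) = 0 := by
          have x1 := h.c1 f (i+1)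
          have x2 := h.c1' f (i+1)
          have x3 := h.c1 f (i+2)
          have x4 := h.c1' f (i+2)
          have x5 := h.c2 f (i+1)
          rw [show i+1+1 = i+2 by ring] at x1 x2 x5
          rw [show i+2+1 = i+3 by ring] at x3 x4
          rw [show i+1+2 = i+3 by ring] at x5
          rw [f1, f2] at x1 x2
          rw [f2, e] at x3 x4
          rw [f1, f2, e] at x5
          exact RII_aux _ _ _ x1 x2 x3 x4 x5
        rw [s, f1, g1, f2, e] at this
        unfold val at G0
        rw [g1] at G0
        have j1 : J R R = -1 := by decide
        have j2 : lv R = -1 := by decide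
        have j3 : lv I = 1 := by decide
        have j4 : bv I = 0 := by decide
        omega
      · exfalso
        have a := h.vt f (i+2) (i+3) (by ring)
        rw [f2, e] at a
        have a : val w σ f (i+2) = 0 := by simpa using tab_R a
        have := h.far hfg.symm i (i+2) (by omega) (by omega)
        omega
      · exact e
    have f3 := key hfg F0 G0 f1 g1 f2 g2 f0 f0' hs g0 g0'
    have g3 := key hfg.symm G0 F0 g1 f1 g2 f2 g0 g0' hs.symm f0 f0'
    have key2 : ∀ {f g : κ}, f ≠ g → w f (i+2) = I → w g (i+2) = I → w f (i+3) = L →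
        w g (i+3) = L → val w σ g (i+3) = 0 ∧ w g (i+4) ≠ R ∧ w g (i+4) ≠ I := by
      intro f g hfg f2 g2 f3 g3
      have a := h.vt f (i+2) (i+3) (by ring)
      rw [f2, f3] at a
      have a : val w σ f (i+2) = 2 := by simpa using tab_L a
      have b := h.vt g (i+3) (i+4) (by ring)
      rw [g3] at b
      have b := tabL b
      have := h.adj' hfg (i+2) (by rw [show i+2+1 = i+3 by ring]; simp [f3])
        (by rw [show i+2+1 = i+3 by ring]; simp [f3])
      rw [show i+2+1 = i+3 by ring] at this
      have bad := h.not_bad3 g (i+2)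
      rw [g2, show i+2+1 = i+3 by ring, g3, show i+2+2 = i+4 by ring] at bad
      rcases b with b | b
      · omega
      · refine ⟨b.2, b.1, ?_⟩
        intro e; rw [e] at bad; revert bad; decide
    obtain ⟨v1, v2, v3⟩ := key2 hfg f2 g2 f3 g3
    by_cases h5 : 5 ≤ t
    · have := h.far hfg i (i+3) (by omega) (by omega)
      omega
    · have ht : t = 4 := by omega
      have e4' : ∀ f, w f (i+4) = w f i := fun f => by rw [← h.per f i, ht]
      have := h.adj' hfg.symm (i+3)
          (by rw [show i+3+1 = i+4 by ring]; simp [v3])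
          (by rw [show i+3+1 = i+4 by ring]; simp [v2])
      rw [show i+3+1 = i+t by omega, h.val_per] at this
      omega
  · have ht : t = 3 := by have := h.ht; omega
    have e3 : ∀ f, w f (i+3) = w f i := fun f => by rw [← h.per f i, ht]
    rcases lt_cases (w f i) with e | e | e | e
    · have x1 := h.c1 f i
      have x2 := h.c1' f i
      have x3 := h.c1 f (i+1)
      have x4 := h.c1' f (i+1)
      have x5 := h.c1 f (i+2)
      have x6 := h.c1' f (i+2)
      have e' : σ f (i+2+1) = σ f i := by rw [← h.pers f i, ht]; congr 1; ring
      rw [show i+1+1 = i+2 by ring, f1, f2] at x3 x4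
      rw [e, f1] at x1 x2
      rw [e', show i+2+1 = i+3 by ring, e3, f2, e] at x5 x6
      exact ORI_aux _ _ _ x1 x2 x3 x4 x5 x6
    · exact f0' e
    · have eg : w g i = R := by
        rcases lt_cases (w g i) with e' | e' | e' | e' <;> simp_all
      have a := h.vt f (i+2) (i+3) (by ring)
      rw [f2, e3, e] at a
      have a : val w σ f (i+2) = 0 := by simpa using tab_R a
      have := h.dist2 hfg.symm i (by simp [e]) (by simp [eg])
      omega
    · exact f0 e

/-- Three outside gadgets, two of which have letter `R` at a common position. -/
theorem caseR (h : Cfg t w σ) {f g k : κ} (hfg : f ≠ g) (hfk : f ≠ k) (hgk : g ≠ k) (i : ℤ)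
    (f1 : w f (i+2) = R) (g1 : w g (i+2) = R) : False := by
  -- preliminary relations
  have lft : ∀ f j, w f (j+1) = R →
      (w f j = L ∧ val w σ f j = -2) ∨ (w f j ≠ L ∧ val w σ f j = 0) := fun f j e => by
    have a := h.vt f j _ rfl
    rw [e] at a; exact tab_R a
  have rgt : ∀ f j, w f j = R →
      (w f (j+1) = I ∧ val w σ f j = 2) ∨ (w f (j+1) ≠ I ∧ val w σ f j = 0) := fun f j e => by
    have a := h.vt f j _ rfl
    rw [e] at a; exact tabR a
  have sm : ∀ f g j, f ≠ g → w f (j+1) = R → w g (j+1) = R →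
      val w σ f j + val w σ g (j+1) ≠ 0 := fun f g j hfg e e' =>
    h.adj' hfg j (by simp [e]) (by simp [e'])
  -- case c
  have casec : ∀ f g, f ≠ g → f ≠ k → g ≠ k → w f (i+2) = R → w g (i+2) = R →
      w f (i+1) ≠ L → w g (i+1) = L → False := by
    intro f g hfg hfk hgk f2 g2 f1 g1
    have n1 : i + 1 + 1 = i + 2 := by ring
    have n2 : i + 2 + 1 = i + 3 := by ring
    have lf := lft f (i+1) (by rw [n1, f2])
    have lg := lft g (i+1) (by rw [n1, g2])
    have rf := rgt f (i+2) f2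
    have rg := rgt g (i+2) g2
    have s1 := sm f g (i+1) hfg (by rw [n1, f2]) (by rw [n1, g2])
    have s2 := sm g f (i+1) hfg.symm (by rw [n1, g2]) (by rw [n1, f2])
    rw [n1] at s1 s2
    rw [n2] at rf rg
    have lf' : val w σ f (i+1) = 0 := by simpa [f1] using lf
    have lg' : val w σ g (i+1) = -2 := by simpa [g1] using lg
    have rf' : val w σ f (i+2) = 0 := by omega
    have rg' : val w σ g (i+2) = 2 := by omega
    have f3 : w f (i+3) ≠ I := by rcases rf with r | r <;> [omega; exact r.1]
    have g3 : w g (i+3) = I := by rcases rg with r | r <;> [exact r.1; omega]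
    have f1R : w f (i+1) = R := by
      have := h.same f g (i+1)
      rw [g1] at this
      rcases lt_cases (w f (i+1)) with e | e | e | e <;> simp_all
    have f3O : w f (i+3) = O := by
      have := h.same f g (i+3)
      rw [g3] at this
      rcases lt_cases (w f (i+3)) with e | e | e | e <;> simp_all
    have k2 : w k (i+2) = R ∨ w k (i+2) = L := by
      have := h.same f k (i+2)
      rw [f2] at this
      rcases lt_cases (w k (i+2)) with e | e | e | e <;> simp_all
    have k1 : w k (i+1) = R ∨ w k (i+1) = L := by
      have := h.same f k (i+1)
      rw [f1R] at this
      rcases lt_cases (w k (i+1)) with e | e | e | e <;> simp_all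
    rcases k2 with k2 | k2
    · have lk := lft k (i+1) (by rw [n1, k2])
      have rk := rgt k (i+2) k2
      have t1 := sm f k (i+1) hfk (by rw [n1, f2]) (by rw [n1, k2])
      have t3 := sm g k (i+1) hgk (by rw [n1, g2]) (by rw [n1, k2])
      rw [n1] at t1 t3
      omega
    · rcases k1 with k1 | k1
      · -- f, k both R at i+1
        have rk := rgt k (i+1) k1
        rw [n1, k2] at rk
        have rk : val w σ k (i+1) = 0 := by simpa using rk
        have t1 := sm f k i hfk f1R k1
        have t2 := sm k f i hfk.symm k1 f1R
        have lf := lft f i f1R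
        have lk := lft k i k1
        have a1 : w f i = L := by rcases lf with r | r <;> [exact r.1; omega]
        have a2 : w k i = L := by rcases lk with r | r <;> [exact r.1; omega]
        refine h.caseb hfk (i-1) ?_ ?_ ?_ ?_
        · rw [show i-1+1 = i by ring, a1]
        · rw [show i-1+1 = i by ring, a2]
        · rw [show i-1+2 = i+1 by ring, f1R]
        · rw [show i-1+2 = i+1 by ring, k1]
      · -- g, k both L at i+1
        have x1 := h.vt k i _ rfl
        rw [k1] at x1
        have x1 := tab_L x1
        have x2 := h.vt k (i+1) (i+2) (by ring)
        rw [k1, k2] at x2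
        have x2 : val w σ k (i+1) = 0 := by simpa using tabL x2
        have y1 := h.vt g i _ rfl
        rw [g1] at y1
        have y1 := tab_L y1
        have u1 := h.adj' hgk i (by simp [g1]) (by simp [g1])
        have u2 := h.adj' hgk.symm i (by simp [k1]) (by simp [k1])
        have kI : w k i ≠ I := by rcases x1 with r | r <;> [omega; exact r.1]
        have kv : val w σ k i = 0 := by omega
        have gI : w g i = I := by rcases y1 with r | r <;> [exact r.1; omega]
        have kO : w k i = O := by
          have := h.same g k i
          rw [gI] at this
          rcases lt_cases (w k i) with e | e | e | e <;> simp_all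
        have := h.dist2 hfk.symm i (by simp [kO]) (by simp [kO])
        omega
  have n1 : i + 1 + 1 = i + 2 := by ring
  have n2 : i + 2 + 1 = i + 3 := by ring
  by_cases hf : w f (i+1) = L
  · by_cases hg : w g (i+1) = L
    · exact h.caseb hfg i hf hg f1 g1
    · exact casec g f hfg.symm hgk hfk g1 f1 hg hf
  · by_cases hg : w g (i+1) = L
    · exact casec f g hfg hfk hgk f1 g1 hf hg
    · have lf := lft f (i+1) (by rw [n1, f1])
      have lg := lft g (i+1) (by rw [n1, g1])
      have rf := rgt f (i+2) f1
      have rg := rgt g (i+2) g1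
      have s1 := sm f g (i+1) hfg (by rw [n1, f1]) (by rw [n1, g1])
      have s2 := sm g f (i+1) hfg.symm (by rw [n1, g1]) (by rw [n1, f1])
      rw [n1] at s1 s2
      rw [n2] at rf rg
      simp only [hf, hg, false_and, false_or, ne_eq, not_false_eq_true, true_and] at lf lg
      have f3 : w f (i+3) = I := by rcases rf with r | r <;> [exact r.1; omega]
      have g3 : w g (i+3) = I := by rcases rg with r | r <;> [exact r.1; omega]
      refine h.casea hfg (i+1) ?_ ?_ ?_ ?_ hf hg
      · rw [n1, f1]
      · rw [n1, g1]
      · rw [show i+1+2 = i+3 by ring, f3]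
      · rw [show i+1+2 = i+3 by ring, g3]

theorem caseR' (h : Cfg t w σ) {f g k : κ} (hfg : f ≠ g) (hfk : f ≠ k) (hgk : g ≠ k) (i : ℤ)
    (f1 : w f i = R) (g1 : w g i = R) : False :=
  h.caseR hfg hfk hgk (i-2) (by rw [show i-2+2 = i by ring, f1]) (by rw [show i-2+2 = i by ring, g1])

theorem caseL (h : Cfg t w σ) {f g k : κ} (hfg : f ≠ g) (hfk : f ≠ k) (hgk : g ≠ k) (i : ℤ)
    (f1 : w f i = L) (g1 : w g i = L) : False := by
  refine h.mirror.caseR' hfg hfk hgk (-i) ?_ ?_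
  · simp only [neg_neg, f1]; decide
  · simp only [neg_neg, g1]; decide

theorem bi_false (h : Cfg t w σ) {f g k : κ} (hfg : f ≠ g) (hfk : f ≠ k) (hgk : g ≠ k) (i : ℤ)
    (hb : (w f i).1 = true) : False := by
  have c : ∀ a : Lt, a.1 = true → a = R ∨ a = L := by decide
  have hf := c _ hb
  have hg := c _ ((h.same f g i) ▸ hb)
  have hk := c _ ((h.same f k i) ▸ hb)
  rcases hf with hf | hf <;> rcases hg with hg | hg <;> rcases hk with hk | hk
  · exact h.caseR' hfg hfk hgk i hf hg
  · exact h.caseR' hfg hfk hgk i hf hg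
  · exact h.caseR' hfk hfg hgk.symm i hf hk
  · exact h.caseL hgk hfg.symm hfk.symm i hg hk
  · exact h.caseR' hgk hfg.symm hfk.symm i hg hk
  · exact h.caseL hfk hfg hgk.symm i hf hk
  · exact h.caseL hfg hfk hgk i hf hg
  · exact h.caseL hfg hfk hgk i hf hg

theorem IIII_aux : ∀ s0 s1 s2 s3 s4 : Bool, nb s0 s2 ≠ 0 → nb s1 s3 ≠ 0 → nb s2 s4 ≠ 0 →
    nb s0 s3 ≠ 1 → nb s1 s4 ≠ 1 → False := by decide

theorem mono_false (h : Cfg t w σ) (h4 : 4 ≤ t) {f g : κ} (hfg : f ≠ g)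
    (hm : ∀ f i, (w f i).1 = false) : False := by
  have c : ∀ a : Lt, a.1 = false → a = O ∨ a = I := by decide
  have all : ∀ f i, w f i = O := by
    intro f i
    rcases c _ (hm f i) with e | e
    · exact e
    exfalso
    have step : ∀ i, w f i = I → w f (i+1) = I := by
      intro i e
      rcases c _ (hm f (i+1)) with e1 | e1
      · exfalso
        have b := h.not_bad3 f i
        rw [e, e1] at b
        rcases c _ (hm f (i+2)) with e2 | e2 <;> rw [e2] at b <;> revert b <;> decide
      · exact e1
    have e1 := step _ e
    have e2 := step _ e1
    have e3 := step _ e2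
    have e4 := step _ e3
    rw [show i+1+1 = i+2 by ring] at e2 e3 e4
    rw [show i+2+1 = i+3 by ring] at e3 e4
    rw [show i+3+1 = i+4 by ring] at e4
    have j3 : lv I = 1 := by decide
    have j5 : rv I = 1 := by decide
    have j4 : bv I = 0 := by decide
    have x1 := h.c2 f i
    have x2 := h.c2 f (i+1)
    have x3 := h.c2 f (i+2)
    have x4 := h.c3 h4 f i
    have x5 := h.c3 h4 f (i+1)
    simp only [show i+1+1 = i+2 by ring, show i+2+1 = i+3 by ring, show i+3+1 = i+4 by ring,
      show i+1+2 = i+3 by ring, show i+2+2 = i+4 by ring, show i+1+3 = i+4 by ring,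
      e, e1, e2, e3, e4, j3, j4, j5] at x1 x2 x3 x4 x5
    exact IIII_aux (σ f i) (σ f (i+1)) (σ f (i+2)) (σ f (i+3)) (σ f (i+4))
      (by omega) (by omega) (by omega) (by omega) (by omega)
  have v : ∀ f i, val w σ f i = 0 := by
    intro f i
    have := h.vt f i _ rfl
    rw [all, all] at this
    simpa [tab] using this
  have := h.adj' hfg 0 (by simp [all]) (by simp [all])
  rw [v, v] at this
  simp at this
end Cfg

/-! ### Lists of gadgets and their cost -/

section Lists
variable {ι : Type*}

/-- cost of a path (inner vertices only) -/
def pc (x : ι → ι → Bool) : List ι → ℤ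
  | u :: v :: w :: l => 1 + nb (x v u) (x v w) + pc x (v :: w :: l)
  | _ => 0

/-- cost of a closed list -/
def cc (x : ι → ι → Bool) (l : List ι) : ℤ := pc x (l ++ l.take 2)

def seg (z : ℤ → ι) : ℤ → ℕ → List ι
  | _, 0 => []
  | i, n + 1 => z i :: seg z (i + 1) n

theorem seg_length (z : ℤ → ι) (i : ℤ) (n : ℕ) : (seg z i n).length = n := by
  induction n generalizing i with
  | zero => rfl
  | succ n ih => simp [seg, ih]

theorem seg_append (z : ℤ → ι) (i : ℤ) (n m : ℕ) :
    seg z i (n + m) = seg z i n ++ seg z (i + n) m := by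
  induction n generalizing i with
  | zero => simp [seg]
  | succ n ih =>
    rw [show n + 1 + m = (n + m) + 1 by ring, seg, ih, seg]
    rw [show i + ((n + 1 : ℕ) : ℤ) = i + 1 + n by push_cast; ring, List.cons_append]

theorem mem_seg {z : ℤ → ι} {i : ℤ} {n : ℕ} {a : ι} (h : a ∈ seg z i n) : ∃ j, z j = a := by
  induction n generalizing i with
  | zero => simp [seg] at h
  | succ n ih =>
    simp only [seg, List.mem_cons] at h
    rcases h with h | h
    · exact ⟨i, h.symm⟩
    · exact ih h

theorem not_mem_seg {z : ℤ → ι} {f : ι} (hf : ∀ j, z j ≠ f) (i : ℤ) (n : ℕ) : f ∉ seg z i n := by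
  intro h
  obtain ⟨j, hj⟩ := mem_seg h
  exact hf j hj

theorem pc_insert (x : ι → ι → Bool) (z : ℤ → ι) (j : ℤ) (n m : ℕ) (g : ι) :
    pc x (seg z j (n + 2) ++ g :: seg z (j + n + 2) (m + 2))
      = pc x (seg z j (n + 2 + (m + 2))) + 1
        + (nb (x (z (j+n+1)) (z (j+n))) (x (z (j+n+1)) g)
            - nb (x (z (j+n+1)) (z (j+n))) (x (z (j+n+1)) (z (j+n+2))))
        + nb (x g (z (j+n+1))) (x g (z (j+n+2)))
        + (nb (x (z (j+n+2)) g) (x (z (j+n+2)) (z (j+n+3)))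
            - nb (x (z (j+n+2)) (z (j+n+1))) (x (z (j+n+2)) (z (j+n+3)))) := by
  induction n generalizing j with
  | zero =>
    rw [show 0 + 2 + (m + 2) = (m + 1 + 1 + 1) + 1 by ring]
    simp only [seg, List.cons_append, List.nil_append, pc, Nat.cast_zero, add_zero,
      show j + 1 + 1 = j + 2 by ring, show j + 2 + 1 = j + 3 by ring]
    ring
  | succ n ih =>
    have := ih (j + 1)
    rw [show n + 1 + 2 + (m + 2) = (n + 2 + (m + 2)) + 1 by ring]
    rw [show n + 2 + (m + 2) = (n + m + 1 + 1 + 1) + 1 by ring] at this ⊢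
    simp only [seg, List.cons_append, pc] at this ⊢
    push_cast
    simp only [show j + 1 + 1 = j + 2 by ring, 
      show j + ((n:ℤ) + 1) = j + n + 1 by ring, show j + 1 + (n:ℤ) = j + n + 1 by ring,
      show j + (n:ℤ) + 1 + 1 = j + n + 2 by ring, show j + (n:ℤ) + 1 + 2 = j + n + 3 by ring,
      show j + (n:ℤ) + 1 + 3 = j + n + 4 by ring] at this ⊢
    rw [this]
    ring

/-- All the data about an extremal cycle. -/
structure XCyc (x : ι → ι → Bool) (z : ℤ → ι) (t : ℕ) (c : ℤ) : Prop where
  ht : 3 ≤ t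
  per : ∀ i, z (i + t) = z i
  nd : ∀ i, (seg z i t).Nodup
  cost : ∀ i, pc x (seg z i (t + 2)) = c
  H2 : ∀ l : List ι, l.Nodup → 3 ≤ l.length → cc x l ≠ c + 2
  H0 : ∀ l : List ι, l.Nodup → t < l.length → cc x l ≠ c

namespace XCyc
variable {x : ι → ι → Bool} {z : ℤ → ι} {t : ℕ} {c : ℤ}

def rr (x : ι → ι → Bool) (z : ℤ → ι) (f : ι) (i : ℤ) : ℤ :=
  nb (x (z i) (z (i-1))) (x (z i) f) - nb (x (z i) (z (i-1))) (x (z i) (z (i+1)))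
def ll (x : ι → ι → Bool) (z : ℤ → ι) (f : ι) (i : ℤ) : ℤ :=
  nb (x (z i) f) (x (z i) (z (i+1))) - nb (x (z i) (z (i-1))) (x (z i) (z (i+1)))
def bb (x : ι → ι → Bool) (z : ℤ → ι) (i : ℤ) : ℤ :=
  nb (x (z i) (z (i-1))) (x (z i) (z (i+1)))
def jj (x : ι → ι → Bool) (z : ℤ → ι) (f g : ι) (i : ℤ) : ℤ :=
  nb (x (z i) f) (x (z i) g) - nb (x (z i) (z (i-1))) (x (z i) (z (i+1)))
def ss (x : ι → ι → Bool) (z : ℤ → ι) (f : ι) (i j : ℤ) : ℤ := nb (x f (z i)) (x f (z j))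

/-- closing up -/
theorem close (h : XCyc x z t c) (i j : ℤ) (n : ℕ) (hn : j + n = i - 1 + t) (M : List ι) :
    cc x (z (i-1) :: z i :: M ++ seg z j n) = pc x (z (i-1) :: z i :: M ++ seg z j (n + 2)) := by
  have e1 : z (j + n) = z (i - 1) := by rw [hn, h.per]
  have e2 : z (j + n + 1) = z i := by
    rw [hn, show i - 1 + t + 1 = i + (t:ℤ) by ring, h.per]
  rw [seg_append z j n 2, cc]
  simp [seg, e1, e2]

theorem d1 (h : XCyc x z t c) (f : ι) (hf : ∀ j, z j ≠ f) (i : ℤ) :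
    ∃ l : List ι, l.Nodup ∧ l.length = t + 1 ∧
      cc x l = c + 1 + (ss x z f i (i+1) + rr x z f i + ll x z f (i+1)) := by
  obtain ⟨T, rfl⟩ : ∃ T, t = T + 3 := ⟨t - 3, by have := h.ht; omega⟩
  refine ⟨z (i-1) :: z i :: [f] ++ seg z (i+1) (T+1), ?_, ?_, ?_⟩
  · have N := h.nd (i-1)
    have := not_mem_seg hf (i+1) (T+1)
    have := not_mem_seg hf (i+1+1) T
    have := hf (i-1)
    have := hf i
    have := hf (i+1)
    simp only [seg, sub_add_cancel, List.nodup_cons, List.mem_cons, not_or, List.cons_append,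
      List.nil_append] at *
    simp_all [eq_comm]
  · simp [seg_length]
  · rw [h.close i (i+1) (T+1) (by push_cast; ring)]
    have C := h.cost (i-1)
    simp only [seg, sub_add_cancel, List.cons_append, List.nil_append, pc, ss, rr, ll,
      show i + 1 + 1 = i + 2 by ring, show i + 1 - 1 = i by ring] at C ⊢
    linarith

theorem d2 (h : XCyc x z t c) (f : ι) (hf : ∀ j, z j ≠ f) (i : ℤ) :
    ∃ l : List ι, l.Nodup ∧ l.length = t ∧
      cc x l = c + (ss x z f i (i+2) + rr x z f i + ll x z f (i+2)) - bb x z (i+1) := by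
  obtain ⟨T, rfl⟩ : ∃ T, t = T + 3 := ⟨t - 3, by have := h.ht; omega⟩
  refine ⟨z (i-1) :: z i :: [f] ++ seg z (i+2) T, ?_, ?_, ?_⟩
  · have N := h.nd (i-1)
    have := not_mem_seg hf (i+2) T
    have := hf (i-1)
    have := hf i
    simp only [seg, sub_add_cancel, List.nodup_cons, List.mem_cons, not_or, List.cons_append,
      List.nil_append, show i + 1 + 1 = i + 2 by ring] at *
    simp_all [eq_comm]
  · simp [seg_length]
  · rw [h.close i (i+2) T (by push_cast; ring)]
    have C := h.cost (i-1)
    simp only [seg, sub_add_cancel, List.cons_append, List.nil_append, pc, ss, rr, ll, bb,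
      show i + 1 + 1 = i + 2 by ring, show i + 1 - 1 = i by ring, show i + 2 - 1 = i + 1 by ring,
      show i + 2 + 1 = i + 3 by ring] at C ⊢
    linarith

theorem d3 (h : XCyc x z t c) (h4 : 4 ≤ t) (f : ι) (hf : ∀ j, z j ≠ f) (i : ℤ) :
    ∃ l : List ι, l.Nodup ∧ 3 ≤ l.length ∧
      cc x l = c - 1 + (ss x z f i (i+3) + rr x z f i + ll x z f (i+3))
        - bb x z (i+1) - bb x z (i+2) := by
  obtain ⟨T, rfl⟩ : ∃ T, t = T + 4 := ⟨t - 4, by omega⟩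
  refine ⟨z (i-1) :: z i :: [f] ++ seg z (i+3) T, ?_, ?_, ?_⟩
  · have N := h.nd (i-1)
    have := not_mem_seg hf (i+3) T
    have := hf (i-1)
    have := hf i
    simp only [seg, sub_add_cancel, List.nodup_cons, List.mem_cons, not_or, List.cons_append,
      List.nil_append, show i + 1 + 1 = i + 2 by ring, show i + 2 + 1 = i + 3 by ring] at *
    simp_all [eq_comm]
  · simp [seg_length]
  · rw [h.close i (i+3) T (by push_cast; ring)]
    have C := h.cost (i-1)
    simp only [seg, sub_add_cancel, List.cons_append, List.nil_append, pc, ss, rr, ll, bb,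
      show i + 1 + 1 = i + 2 by ring, show i + 1 - 1 = i by ring, show i + 2 - 1 = i + 1 by ring,
      show i + 2 + 1 = i + 3 by ring, show i + 3 - 1 = i + 2 by ring] at C ⊢
    linarith

theorem d4 (h : XCyc x z t c) (f g : ι) (hfg : f ≠ g) (hf : ∀ j, z j ≠ f) (hg : ∀ j, z j ≠ g)
    (i : ℤ) :
    ∃ l : List ι, l.Nodup ∧ 3 ≤ l.length ∧
      cc x l = c + 2 + (ss x z f i (i+1) + rr x z f i + (ss x z g (i+1) (i+2) + ll x z g (i+2))
        + jj x z f g (i+1)) := by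
  obtain ⟨T, rfl⟩ : ∃ T, t = T + 3 := ⟨t - 3, by have := h.ht; omega⟩
  refine ⟨z (i-1) :: z i :: [f, z (i+1), g] ++ seg z (i+2) T, ?_, ?_, ?_⟩
  · have N := h.nd (i-1)
    have := not_mem_seg hf (i+2) T
    have := hf (i-1)
    have := hf i
    have := hf (i+1)
    have := not_mem_seg hg (i+2) T
    have := hg (i-1)
    have := hg i
    have := hg (i+1)
    simp only [seg, sub_add_cancel, List.nodup_cons, List.mem_cons, not_or, List.cons_append,
      List.nil_append, show i + 1 + 1 = i + 2 by ring] at *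
    simp_all [eq_comm]
  · simp [seg_length]
  · rw [h.close i (i+2) T (by push_cast; ring)]
    have C := h.cost (i-1)
    simp only [seg, sub_add_cancel, List.cons_append, List.nil_append, pc, ss, rr, ll, jj,
      show i + 1 + 1 = i + 2 by ring, show i + 1 - 1 = i by ring, show i + 2 - 1 = i + 1 by ring,
      show i + 2 + 1 = i + 3 by ring] at C ⊢
    linarith

theorem d5 (h : XCyc x z t c) (h4 : 4 ≤ t) (f g : ι) (hfg : f ≠ g) (hf : ∀ j, z j ≠ f)
    (hg : ∀ j, z j ≠ g) (i : ℤ) :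
    ∃ l : List ι, l.Nodup ∧ 3 ≤ l.length ∧
      cc x l = c + 1 + (ss x z f i (i+1) + rr x z f i + (ss x z g (i+1) (i+3) + ll x z g (i+3))
        + jj x z f g (i+1)) - bb x z (i+2) := by
  obtain ⟨T, rfl⟩ : ∃ T, t = T + 4 := ⟨t - 4, by omega⟩
  refine ⟨z (i-1) :: z i :: [f, z (i+1), g] ++ seg z (i+3) T, ?_, ?_, ?_⟩
  · have N := h.nd (i-1)
    have := not_mem_seg hf (i+3) T
    have := hf (i-1)
    have := hf i
    have := hf (i+1)
    have := not_mem_seg hg (i+3) T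
    have := hg (i-1)
    have := hg i
    have := hg (i+1)
    simp only [seg, sub_add_cancel, List.nodup_cons, List.mem_cons, not_or, List.cons_append,
      List.nil_append, show i + 1 + 1 = i + 2 by ring, show i + 2 + 1 = i + 3 by ring] at *
    simp_all [eq_comm]
  · simp [seg_length]
  · rw [h.close i (i+3) T (by push_cast; ring)]
    have C := h.cost (i-1)
    simp only [seg, sub_add_cancel, List.cons_append, List.nil_append, pc, ss, rr, ll, jj, bb,
      show i + 1 + 1 = i + 2 by ring, show i + 1 - 1 = i by ring, show i + 2 - 1 = i + 1 by ring,
      show i + 2 + 1 = i + 3 by ring, show i + 3 - 1 = i + 2 by ring] at C ⊢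
    linarith

theorem d5' (h : XCyc x z t c) (h4 : 4 ≤ t) (f g : ι) (hfg : f ≠ g) (hf : ∀ j, z j ≠ f)
    (hg : ∀ j, z j ≠ g) (i : ℤ) :
    ∃ l : List ι, l.Nodup ∧ 3 ≤ l.length ∧
      cc x l = c + 1 + (ss x z g i (i+2) + rr x z g i + (ss x z f (i+2) (i+3) + ll x z f (i+3))
        + jj x z g f (i+2)) - bb x z (i+1) := by
  obtain ⟨T, rfl⟩ : ∃ T, t = T + 4 := ⟨t - 4, by omega⟩
  refine ⟨z (i-1) :: z i :: [g, z (i+2), f] ++ seg z (i+3) T, ?_, ?_, ?_⟩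
  · have N := h.nd (i-1)
    have := not_mem_seg hf (i+3) T
    have := hf (i-1)
    have := hf i
    have := hf (i+2)
    have := not_mem_seg hg (i+3) T
    have := hg (i-1)
    have := hg i
    have := hg (i+2)
    simp only [seg, sub_add_cancel, List.nodup_cons, List.mem_cons, not_or, List.cons_append,
      List.nil_append, show i + 1 + 1 = i + 2 by ring, show i + 2 + 1 = i + 3 by ring] at *
    simp_all [eq_comm]
  · simp [seg_length]
  · rw [h.close i (i+3) T (by push_cast; ring)]
    have C := h.cost (i-1)
    simp only [seg, sub_add_cancel, List.cons_append, List.nil_append, pc, ss, rr, ll, jj, bb,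
      show i + 1 + 1 = i + 2 by ring, show i + 1 - 1 = i by ring, show i + 2 - 1 = i + 1 by ring,
      show i + 2 + 1 = i + 3 by ring, show i + 3 - 1 = i + 2 by ring] at C ⊢
    linarith

theorem d4f (h : XCyc x z t c) (f g : ι) (hfg : f ≠ g) (hf : ∀ j, z j ≠ f) (hg : ∀ j, z j ≠ g)
    (i j : ℤ) (h1 : i + 2 ≤ j) (h2 : j + 2 ≤ i + t) :
    ∃ l : List ι, l.Nodup ∧ 3 ≤ l.length ∧
      cc x l = c + 2 + (ss x z f i (i+1) + rr x z f i + ll x z f (i+1)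
        + (ss x z g j (j+1) + rr x z g j + ll x z g (j+1))) := by
  obtain ⟨d, rfl⟩ : ∃ d : ℕ, j = i + d + 2 := ⟨(j - i - 2).toNat, by omega⟩
  obtain ⟨e, rfl⟩ : ∃ e : ℕ, t = d + e + 4 := ⟨t - d - 4, by omega⟩
  refine ⟨z (i-1) :: z i :: (f :: (seg z (i+1) (d+2) ++ [g])) ++ seg z (i+1+d+2) e, ?_, ?_, ?_⟩
  · have N := h.nd (i-1)
    rw [show d + e + 4 = (d+2+e) + 1 + 1 by ring] at N
    simp only [seg, sub_add_cancel] at N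
    rw [seg_append] at N
    push_cast at N
    rw [show i + 1 + ((d:ℤ) + 2) = i + 1 + d + 2 by ring] at N
    have P : (z (i-1) :: z i :: (f :: (seg z (i+1) (d+2) ++ [g])) ++ seg z (i+1+d+2) e).Perm
        (f :: g :: (z (i-1) :: z i :: (seg z (i+1) (d+2) ++ seg z (i+1+d+2) e))) := by
      classical
      rw [List.perm_iff_count]
      intro a
      simp only [List.count_cons, List.count_append, List.cons_append, List.count_nil]
      ring
    rw [P.nodup_iff, List.nodup_cons, List.nodup_cons]
    refine ⟨?_, ?_, N⟩
    · simp [hfg, not_mem_seg hf, (hf _).symm]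
    · simp [not_mem_seg hg, (hg _).symm]
  · simp [seg_length]
  · rw [h.close i (i+1+d+2) e (by push_cast; ring)]
    have C := h.cost (i-1)
    have Q := pc_insert x z (i+1) d e g
    rw [show d + e + 4 + 2 = (d + 2 + (e+2)) + 1 + 1 by ring] at C
    rw [show d + 2 + (e+2) = (d + e + 2) + 1 + 1 by ring] at C Q
    simp only [seg, sub_add_cancel, List.cons_append, List.nil_append, List.append_assoc,
      pc, ss, rr, ll,
      show i + 1 + 1 = i + 2 by ring, show i + 1 - 1 = i by ring,
      show i + (d:ℤ) + 2 - 1 = i + d + 1 by ring,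
      show i + (d:ℤ) + 1 + 1 = i + d + 2 by ring,
      show i + (d:ℤ) + 1 + 2 = i + d + 3 by ring,
      show i + (d:ℤ) + 1 + 3 = i + d + 4 by ring,
      show i + 1 + (d:ℤ) = i + d + 1 by ring,
      show i + (d:ℤ) + 2 + 1 = i + d + 3 by ring,
      show i + (d:ℤ) + 3 + 1 = i + d + 4 by ring,
      show i + (d:ℤ) + 3 - 1 = i + d + 2 by ring] at C Q ⊢
    linarith

/-- letter of an outer gadget at a position -/
def letter (x : ι → ι → Bool) (z : ℤ → ι) (f : ι) (i : ℤ) : Lt :=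
  (x (z i) (z (i-1)) != x (z i) (z (i+1)),
    if x (z i) (z (i-1)) = x (z i) (z (i+1)) then x (z i) f != x (z i) (z (i-1))
    else x (z i) f == x (z i) (z (i-1)))

theorem rr_eq (x : ι → ι → Bool) (z : ℤ → ι) (f : ι) (i : ℤ) :
    rr x z f i = Lt.rv (letter x z f i) := by
  unfold rr letter
  generalize x (z i) (z (i-1)) = a
  generalize x (z i) (z (i+1)) = b
  generalize x (z i) f = s
  revert a b s; decide
theorem ll_eq (x : ι → ι → Bool) (z : ℤ → ι) (f : ι) (i : ℤ) :
    ll x z f i = Lt.lv (letter x z f i) := by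
  unfold ll letter
  generalize x (z i) (z (i-1)) = a
  generalize x (z i) (z (i+1)) = b
  generalize x (z i) f = s
  revert a b s; decide
theorem bb_eq (x : ι → ι → Bool) (z : ℤ → ι) (f : ι) (i : ℤ) :
    bb x z i = Lt.bv (letter x z f i) := by
  unfold bb letter
  generalize x (z i) (z (i-1)) = a
  generalize x (z i) (z (i+1)) = b
  generalize x (z i) f = s
  revert a b s; decide
theorem jj_eq (x : ι → ι → Bool) (z : ℤ → ι) (f g : ι) (i : ℤ) :
    jj x z f g i = Lt.J (letter x z f i) (letter x z g i) := by
  unfold jj letter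
  generalize x (z i) (z (i-1)) = a
  generalize x (z i) (z (i+1)) = b
  generalize x (z i) f = s
  generalize x (z i) g = s'
  revert a b s s'; decide

theorem cfg (h : XCyc x z t c) :
    Cfg (κ := {f // ∀ j, z j ≠ f}) (t : ℤ) (fun f i => letter x z f i)
      (fun f i => x f (z i)) where
  ht := by exact_mod_cast h.ht
  per f i := by
    simp only [letter]
    rw [h.per, show i + (t:ℤ) - 1 = (i - 1) + t by ring, h.per,
      show i + (t:ℤ) + 1 = (i + 1) + t by ring, h.per]
  pers f i := by simp only [h.per]
  same f g i := rfl
  c1 f i e := by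
    obtain ⟨l, l1, l2, l3⟩ := h.d1 f.1 f.2 i
    rw [rr_eq, ll_eq, ss, e] at l3
    exact h.H2 l l1 (by have := h.ht; omega) (by omega)
  c1' f i e := by
    obtain ⟨l, l1, l2, l3⟩ := h.d1 f.1 f.2 i
    rw [rr_eq, ll_eq, ss, e] at l3
    exact h.H0 l l1 (by omega) (by omega)
  c2 f i e := by
    obtain ⟨l, l1, l2, l3⟩ := h.d2 f.1 f.2 i
    rw [rr_eq, ll_eq, ss, bb_eq x z f, e] at l3
    exact h.H2 l l1 (by have := h.ht; omega) (by omega)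
  c3 h4 f i e := by
    obtain ⟨l, l1, l2, l3⟩ := h.d3 (by exact_mod_cast h4) f.1 f.2 i
    rw [rr_eq, ll_eq, ss, bb_eq x z f, bb_eq x z f, e] at l3
    exact h.H2 l l1 l2 (by omega)
  c4 f g hfg i e := by
    obtain ⟨l, l1, l2, l3⟩ := h.d4 f.1 g.1 (fun h => hfg (Subtype.ext h)) f.2 g.2 i
    rw [rr_eq, ll_eq, ss, ss, jj_eq, e] at l3
    exact h.H2 l l1 l2 (by omega)
  c4f f g hfg i j h1 h2 e := by
    obtain ⟨l, l1, l2, l3⟩ := h.d4f f.1 g.1 (fun h => hfg (Subtype.ext h)) f.2 g.2 i j h1 h2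
    rw [rr_eq, ll_eq, ss, ss, rr_eq, ll_eq, e] at l3
    exact h.H2 l l1 l2 (by omega)
  c5 h4 f g hfg i e := by
    obtain ⟨l, l1, l2, l3⟩ := h.d5 (by exact_mod_cast h4) f.1 g.1
      (fun h => hfg (Subtype.ext h)) f.2 g.2 i
    rw [rr_eq, ll_eq, ss, ss, jj_eq, bb_eq x z g, e] at l3
    exact h.H2 l l1 l2 (by omega)
  c5' h4 f g hfg i e := by
    obtain ⟨l, l1, l2, l3⟩ := h.d5' (by exact_mod_cast h4) f.1 g.1
      (fun h => hfg (Subtype.ext h)) f.2 g.2 i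
    rw [rr_eq, ll_eq, ss, ss, jj_eq, bb_eq x z f, e] at l3
    exact h.H2 l l1 l2 (by omega)

end XCyc
end Lists

section MainComb
variable {ι : Type*}

theorem nb_tri (a b c : Bool) : ∃ q : ℤ, nb a b + nb b c + nb a c = 2 * q ∧ 0 ≤ q ∧ q ≤ 1 := by
  rcases a <;> rcases b <;> rcases c <;> simp [nb]

theorem nb_01 (a b : Bool) : 0 ≤ nb a b ∧ nb a b ≤ 1 := by
  revert a b; decide

theorem tri_even (a b c : ℤ) (ha : 0 ≤ a ∧ a ≤ 1) (hb : 0 ≤ b ∧ b ≤ 1) (hc : 0 ≤ c ∧ c ≤ 1)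
    (h4 : a + b + c ≠ 1) (h6 : a + b + c ≠ 3) : ∃ r, a + b + c = 2 * r := by
  rcases Int.even_or_odd' (a + b + c) with ⟨r, h | h⟩
  · exact ⟨r, h⟩
  · omega

theorem quad_four (a b c d y : ℤ) (ha : 0 ≤ a ∧ a ≤ 1) (hb : 0 ≤ b ∧ b ≤ 1) (hc : 0 ≤ c ∧ c ≤ 1)
    (hd : 0 ≤ d ∧ d ≤ 1) (h4 : a + b + c + d ≠ 0) (h6 : a + b + c + d ≠ 2)
    (hy : a + b + c + d = 2 * y) : a + b + c + d = 4 := by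
  omega

theorem base4 (x : ι → ι → Bool) (a b c d : ι) (hn : [a, b, c, d].Nodup) :
    ∃ l : List ι, l.Nodup ∧ 3 ≤ l.length ∧ (cc x l = 4 ∨ cc x l = 6) := by
  by_contra hcon
  push Not at hcon
  simp only [List.nodup_cons, List.mem_cons, not_or, List.not_mem_nil, not_false_eq_true,
    and_true] at hn
  obtain ⟨⟨ab, ac, ad⟩, ⟨bc, bd⟩, cd, -⟩ := hn
  have t1 := hcon [a, b, c] (by simp; tauto) (by simp)
  have t2 := hcon [a, b, d] (by simp; tauto) (by simp)
  have t3 := hcon [a, c, d] (by simp; tauto) (by simp)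
  have t4 := hcon [b, c, d] (by simp; tauto) (by simp)
  have s1 := hcon [a, b, c, d] (by simp; tauto) (by simp)
  have s2 := hcon [a, b, d, c] (by simp [eq_comm]; simp [eq_comm] at *; tauto) (by simp)
  have s3 := hcon [a, c, b, d] (by simp [eq_comm]; simp [eq_comm] at *; tauto) (by simp)
  simp only [cc, List.take, List.cons_append, List.nil_append, pc] at t1 t2 t3 t4 s1 s2 s3
  rw [nb_comm (x a c) (x a b)] at t1
  rw [nb_comm (x a d) (x a b)] at t2
  rw [nb_comm (x a d) (x a c)] at t3
  rw [nb_comm (x b d) (x b c)] at t4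
  rw [nb_comm (x a d) (x a b), nb_comm (x d c) (x d a)] at s1
  rw [nb_comm (x a c) (x a b), nb_comm (x d b) (x d c), nb_comm (x c d) (x c a)] at s2
  rw [nb_comm (x a d) (x a c), nb_comm (x b c) (x b d), nb_comm (x d b) (x d a)] at s3
  obtain ⟨q1, A1, A2, A3⟩ := nb_tri (x a b) (x a c) (x a d)
  obtain ⟨q2, B1, B2, B3⟩ := nb_tri (x b a) (x b c) (x b d)
  obtain ⟨q3, C1, C2, C3⟩ := nb_tri (x c a) (x c b) (x c d)
  obtain ⟨q4, D1, D2, D3⟩ := nb_tri (x d a) (x d b) (x d c)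
  have ha1 := nb_01 (x a b) (x a c)
  have ha2 := nb_01 (x a c) (x a d)
  have ha3 := nb_01 (x a b) (x a d)
  have hb1 := nb_01 (x b a) (x b c)
  have hb2 := nb_01 (x b c) (x b d)
  have hb3 := nb_01 (x b a) (x b d)
  have hc1 := nb_01 (x c a) (x c b)
  have hc2 := nb_01 (x c b) (x c d)
  have hc3 := nb_01 (x c a) (x c d)
  have hd1 := nb_01 (x d a) (x d b)
  have hd2 := nb_01 (x d b) (x d c)
  have hd3 := nb_01 (x d a) (x d c)
  simp only [nb_comm (x c b) (x c a), nb_comm (x d b) (x d a), nb_comm (x d c) (x d a),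
    nb_comm (x d c) (x d b), nb_comm (x c d) (x c b), nb_comm (x c d) (x c a),
    nb_comm (x b d) (x b a), nb_comm (x b d) (x b c), nb_comm (x b c) (x b a)] at t1 t2 t3 t4 s1 s2 s3
  generalize nb (x a b) (x a c) = a1 at *
  generalize nb (x a c) (x a d) = a2 at *
  generalize nb (x a b) (x a d) = a3 at *
  generalize nb (x b a) (x b c) = b1 at *
  generalize nb (x b c) (x b d) = b2 at *
  generalize nb (x b a) (x b d) = b3 at *
  generalize nb (x c a) (x c b) = c1 at *
  generalize nb (x c b) (x c d) = c2 at *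
  generalize nb (x c a) (x c d) = c3 at *
  generalize nb (x d a) (x d b) = d1 at *
  generalize nb (x d b) (x d c) = d2 at *
  generalize nb (x d a) (x d c) = d3 at *
  obtain ⟨r1, hr1⟩ := tri_even b1 c1 a1 (by assumption) (by assumption) (by assumption)
    (fun h => t1.1 (by linarith)) (fun h => t1.2 (by linarith))
  obtain ⟨r2, hr2⟩ := tri_even b3 d1 a3 (by assumption) (by assumption) (by assumption)
    (fun h => t2.1 (by linarith)) (fun h => t2.2 (by linarith))
  obtain ⟨r3, hr3⟩ := tri_even c3 d3 a2 (by assumption) (by assumption) (by assumption)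
    (fun h => t3.1 (by linarith)) (fun h => t3.2 (by linarith))
  have u1 := quad_four b1 c2 d3 a3 (r1 + r3 + q1 + q3 - a1 - a2 - c1 - c3)
    (by assumption) (by assumption) (by assumption) (by assumption)
    (fun h => s1.1 (by linarith)) (fun h => s1.2 (by linarith)) (by linarith)
  have u2 := quad_four b3 d2 c3 a1 (r2 + r3 + q1 + q4 - a3 - a2 - d1 - d3)
    (by assumption) (by assumption) (by assumption) (by assumption)
    (fun h => s2.1 (by linarith)) (fun h => s2.2 (by linarith)) (by linarith)
  have u3 := quad_four c1 b2 d1 a2 (r1 + r2 + q1 + q2 - a1 - a3 - b1 - b3)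
    (by assumption) (by assumption) (by assumption) (by assumption)
    (fun h => s3.1 (by linarith)) (fun h => s3.2 (by linarith)) (by linarith)
  linarith

theorem seg_nodup {z : ℤ → ι} {i : ℤ} {n : ℕ}
    (h : ∀ a b, i ≤ a → a < b → b < i + n → z a ≠ z b) : (seg z i n).Nodup := by
  have mem : ∀ (n : ℕ) (i : ℤ) (y : ι), y ∈ seg z i n → ∃ a, i ≤ a ∧ a < i + n ∧ z a = y := by
    intro n
    induction n with
    | zero => intro i y hy; simp [seg] at hy
    | succ n ih =>
      intro i y hy
      simp only [seg, List.mem_cons] at hy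
      rcases hy with rfl | hy
      · exact ⟨i, le_refl _, by push_cast; omega, rfl⟩
      · obtain ⟨a, h1, h2, h3⟩ := ih _ _ hy
        exact ⟨a, by omega, by push_cast; omega, h3⟩
  induction n generalizing i with
  | zero => simp [seg]
  | succ n ih =>
    simp only [seg, List.nodup_cons]
    constructor
    · intro hm
      obtain ⟨a, h1, h2, h3⟩ := mem _ _ _ hm
      exact h i a (le_refl _) (by omega) (by push_cast; omega) h3.symm
    · apply ih
      intro a b h1 h2 h3
      exact h a b (by omega) h2 (by push_cast; omega)

theorem pc_seg (x : ι → ι → Bool) (z : ℤ → ι) (i : ℤ) (n : ℕ) :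
    pc x (seg z i (n + 2)) = ∑ j ∈ Finset.range n, (1 + XCyc.bb x z (i + 1 + j)) := by
  induction n generalizing i with
  | zero => simp [seg, pc]
  | succ n ih =>
    have := ih (i + 1)
    rw [Finset.sum_range_succ']
    simp only [seg, pc, XCyc.bb] at this ⊢
    rw [this]
    push_cast
    rw [add_comm]
    congr 1
    · apply Finset.sum_congr rfl
      intro j _
      rw [show i + 1 + 1 + (j:ℤ) = i + 1 + (j + 1) by ring]
    · simp

theorem bb_01 (x : ι → ι → Bool) (z : ℤ → ι) (i : ℤ) :
    0 ≤ XCyc.bb x z i ∧ XCyc.bb x z i ≤ 1 := nb_01 _ _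

theorem seg_get (Z : List ι) (z : ℤ → ι) (i : ℤ)
    (h : ∀ j (hj : j < Z.length), z (i + j) = Z[j]) : seg z i Z.length = Z := by
  induction Z generalizing i with
  | nil => rfl
  | cons a Z ih =>
    simp only [List.length_cons, seg]
    have h0 := h 0 (by simp)
    simp only [Nat.cast_zero, add_zero, List.getElem_cons_zero] at h0
    rw [h0, ih]
    intro j hj
    have := h (j + 1) (by simpa using hj)
    simp only [List.getElem_cons_succ] at this
    rw [← this]; congr 1; push_cast; ring

theorem mkX (x : ι → ι → Bool) (Z : List ι) (hn : Z.Nodup) (h3 : 3 ≤ Z.length) (c : ℤ)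
    (hc : cc x Z = c)
    (H2 : ∀ l : List ι, l.Nodup → 3 ≤ l.length → cc x l ≠ c + 2)
    (H0 : ∀ l : List ι, l.Nodup → Z.length < l.length → cc x l ≠ c) :
    ∃ z : ℤ → ι, XCyc x z Z.length c ∧ ∀ j, z j ∈ Z := by
  have lt : ∀ i : ℤ, (i % Z.length).toNat < Z.length := by
    intro i
    have := Int.emod_lt_of_pos i (show (0:ℤ) < Z.length by omega)
    have := Int.emod_nonneg i (show (Z.length : ℤ) ≠ 0 by omega)
    omega
  let z : ℤ → ι := fun i => Z[(i % Z.length).toNat]'(lt i)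
  have hz : ∀ i, z i = Z[(i % Z.length).toNat]'(lt i) := fun _ => rfl
  have per : ∀ i, z (i + Z.length) = z i := by
    intro i
    simp only [hz, Int.add_emod_right]
  have inj : ∀ a b : ℤ, a < b → b < a + Z.length → z a ≠ z b := by
    intro a b h1 h2 h
    rw [hz, hz, hn.getElem_inj_iff] at h
    have p1 := Int.emod_nonneg a (show (Z.length : ℤ) ≠ 0 by omega)
    have p2 := Int.emod_nonneg b (show (Z.length : ℤ) ≠ 0 by omega)
    have : b % Z.length = a % Z.length := by omega
    have h5 : (Z.length : ℤ) ∣ b - a := Int.ModEq.dvd this.symm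
    have := Int.le_of_dvd (by omega) h5
    omega
  have e0 : seg z 0 Z.length = Z := by
    apply seg_get
    intro j hj
    rw [hz]
    congr 1
    rw [zero_add, Int.emod_eq_of_lt (by omega) (by omega)]; simp
  have e2 : seg z 0 (Z.length + 2) = Z ++ Z.take 2 := by
    rw [seg_append, e0]
    congr 1
    rw [zero_add]
    have q0 := per 0
    have q1 := per 1
    rw [zero_add] at q0
    rw [add_comm] at q1
    simp only [seg, q0, q1]
    conv_rhs => rw [← e0]
    obtain ⟨T, hT⟩ : ∃ T, Z.length = T + 2 := ⟨Z.length - 2, by omega⟩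
    rw [hT]
    simp [seg]
  have shift : ∀ i, pc x (seg z (i+1) (Z.length + 2)) = pc x (seg z i (Z.length + 2)) := by
    intro i
    rw [pc_seg, pc_seg]
    have A := Finset.sum_range_succ (fun j : ℕ => 1 + XCyc.bb x z (i + 1 + j)) Z.length
    have B := Finset.sum_range_succ' (fun j : ℕ => 1 + XCyc.bb x z (i + 1 + j)) Z.length
    have C : XCyc.bb x z (i + 1 + Z.length) = XCyc.bb x z (i + 1 + ((0:ℕ) : ℤ)) := by
      unfold XCyc.bb
      rw [per, show i + 1 + (Z.length : ℤ) - 1 = i + Z.length by ring, per,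
        show i + 1 + (Z.length : ℤ) + 1 = i + 2 + Z.length by ring, per]
      simp [show i + 1 + 1 = i + 2 by ring]
    have D : ∑ j ∈ Finset.range Z.length, (1 + XCyc.bb x z (i + 1 + 1 + j))
        = ∑ j ∈ Finset.range Z.length, (1 + XCyc.bb x z (i + 1 + ((j + 1 : ℕ) : ℤ))) := by
      apply Finset.sum_congr rfl
      intro j _
      push_cast
      rw [show i + 1 + 1 + (j:ℤ) = i + 1 + (j + 1) by ring]
    rw [D]
    linarith
  have cost : ∀ i, pc x (seg z i (Z.length + 2)) = c := by
    have c0 : pc x (seg z 0 (Z.length + 2)) = c := by rw [e2]; exact hc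
    intro i
    induction i using Int.induction_on with
    | zero => exact c0
    | succ i ih => rw [shift]; exact ih
    | pred i ih => rw [← shift, sub_add_cancel]; exact ih
  exact ⟨z, ⟨h3, per, fun i => seg_nodup fun a b h1 h2 h3 => inj a b h2 (by omega), cost, H2, H0⟩,
    fun j => List.getElem_mem _⟩

theorem main_comb [Fintype ι] [DecidableEq ι] (x : ι → ι → Bool)
    (he : Even (Fintype.card ι)) (h6 : 6 ≤ Fintype.card ι) :
    ∃ l : List ι, l.Nodup ∧ 3 ≤ l.length ∧ cc x l = Fintype.card ι := by
  set m := Fintype.card ι with hm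
  have hbase : ∃ c : ℤ, Even c ∧ c ≤ m ∧ ∃ l : List ι, l.Nodup ∧ 3 ≤ l.length ∧ cc x l = c := by
    have hlen : (Finset.univ : Finset ι).toList.length = m := by simp [hm]
    have hnd := Finset.nodup_toList (Finset.univ : Finset ι)
    obtain ⟨l, h1, h2, h3⟩ : ∃ l : List ι, l.Nodup ∧ 3 ≤ l.length ∧ (cc x l = 4 ∨ cc x l = 6) := by
      revert hlen hnd
      generalize (Finset.univ : Finset ι).toList = L
      intro hlen hnd
      match L, hlen, hnd with
      | a :: b :: c :: d :: L, hlen, hnd =>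
        apply base4 x a b c d
        simp only [List.nodup_cons, List.mem_cons, not_or] at hnd ⊢
        simp; tauto
      | [], hlen, _ => simp at hlen; omega
      | [a], hlen, _ => simp at hlen; omega
      | [a, b], hlen, _ => simp at hlen; omega
      | [a, b, c], hlen, _ => simp at hlen; omega
    rcases h3 with h3 | h3
    · exact ⟨4, by decide, by omega, l, h1, h2, h3⟩
    · exact ⟨6, by decide, by omega, l, h1, h2, h3⟩
  obtain ⟨c, ⟨ce, cm, l0, l01, l02, l03⟩, cmax⟩ :=
    Int.exists_greatest_of_bdd (P := fun c : ℤ => Even c ∧ c ≤ m ∧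
      ∃ l : List ι, l.Nodup ∧ 3 ≤ l.length ∧ cc x l = c) ⟨m, fun z hz => hz.2.1⟩ hbase
  rcases eq_or_lt_of_le cm with hcm | hcm
  · exact ⟨l0, l01, l02, by rw [l03, hcm]⟩
  exfalso
  obtain ⟨T, ⟨Z, Z1, Z2, Z3, Z4⟩, tmax⟩ :=
    Int.exists_greatest_of_bdd (P := fun n : ℤ =>
      ∃ l : List ι, l.Nodup ∧ 3 ≤ l.length ∧ cc x l = c ∧ (l.length : ℤ) = n)
      ⟨m, by
        rintro n ⟨l, h1, h2, h3, h4⟩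
        have := h1.length_le_card
        omega⟩ ⟨_, l0, l01, l02, l03, rfl⟩
  obtain ⟨m', hm'⟩ := he
  obtain ⟨c', hc'⟩ := ce
  obtain ⟨z, hX, hzZ⟩ := mkX x Z Z1 Z2 c Z3
    (by
      intro l h1 h2 h3
      have := cmax (c + 2) ⟨⟨c' + 1, by omega⟩, by omega, l, h1, h2, h3⟩
      omega)
    (by
      intro l h1 h2 h3
      have := tmax l.length ⟨l, h1, by omega, h3, rfl⟩
      omega)
  have hcfg := hX.cfg
  have hcost := hX.cost 0
  rw [pc_seg] at hcost
  have hF : ((Finset.univ : Finset ι) \ Z.toFinset).card = m - Z.length := by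
    rw [Finset.card_sdiff_of_subset (Finset.subset_univ _), List.toFinset_card_of_nodup Z1,
      Finset.card_univ]
  have hout : ∀ f, f ∈ (Finset.univ : Finset ι) \ Z.toFinset → ∀ j, z j ≠ f := by
    intro f hf j e
    simp only [Finset.mem_sdiff, Finset.mem_univ, true_and, List.mem_toFinset] at hf
    exact hf (e ▸ hzZ j)
  have hZm := Z1.length_le_card
  by_cases hbi : ∀ i, XCyc.bb x z i = 0
  · have hcl : c = Z.length := by
      rw [← hcost]
      simp [hbi]
    have h2 : 1 < ((Finset.univ : Finset ι) \ Z.toFinset).card := by omega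
    obtain ⟨f, hf, g, hg, hfg⟩ := Finset.one_lt_card.1 h2
    refine hcfg.mono_false (f := ⟨f, hout f hf⟩) (g := ⟨g, hout g hg⟩) (by omega)
      (fun h => hfg (congrArg Subtype.val h)) ?_
    intro f i
    have := hbi i
    rw [XCyc.bb_eq x z f, Lt.bv] at this
    by_contra h
    simp only [Bool.not_eq_false] at h
    simp [h] at this
  · push Not at hbi
    obtain ⟨i, hi⟩ := hbi
    have hcl : (Z.length : ℤ) + 1 ≤ c := by
      have hcost := hX.cost (i - 1)
      rw [pc_seg, Finset.sum_add_distrib] at hcost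
      have h1 := Finset.single_le_sum (f := fun j : ℕ => XCyc.bb x z (i - 1 + 1 + j))
        (s := Finset.range Z.length) (fun j _ => (bb_01 x z _).1) (Finset.mem_range.2 (show 0 < Z.length by omega))
      simp only [Nat.cast_zero, add_zero, sub_add_cancel] at h1
      have := (bb_01 x z i).1
      simp at hcost
      omega
    have h2 : 2 < ((Finset.univ : Finset ι) \ Z.toFinset).card := by omega
    obtain ⟨f, g, k, hf, hg, hk, hfg, hfk, hgk⟩ := Finset.two_lt_card_iff.1 h2
    refine hcfg.bi_false (f := ⟨f, hout f hf⟩) (g := ⟨g, hout g hg⟩) (k := ⟨k, hout k hk⟩)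
      (fun h => hfg (congrArg Subtype.val h)) (fun h => hfk (congrArg Subtype.val h))
      (fun h => hgk (congrArg Subtype.val h)) i ?_
    rw [XCyc.bb_eq x z f, Lt.bv] at hi
    by_contra h
    simp only [Bool.not_eq_true] at h
    simp [h] at hi

end MainComb

section Realize
variable {ι V : Type*}

/-- the vertices of `G` traversed by a path of gadgets -/
def ev (x : ι → ι → Bool) (en : ι → Bool → V) : List ι → List V
  | u :: v :: w :: l =>
    (if x v u = x v w then [en v (x v u)] else [en v (x v u), en v (x v w)]) ++
      ev x en (v :: w :: l)
  | _ => []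

theorem ev_length (x : ι → ι → Bool) (en : ι → Bool → V) (l : List ι) :
    ((ev x en l).length : ℤ) = pc x l := by
  fun_induction ev x en l with
  | case1 u v w l ih =>
    rw [pc, ← ih, nb]
    split_ifs <;> simp <;> ring
  | case2 l h =>
    match l, h with
    | [], _ => simp [pc]
    | [a], _ => simp [pc]
    | [a, b], _ => simp [pc]
    | a :: b :: c :: l, h => exact absurd rfl (h a b c l)

theorem ev_mem (x : ι → ι → Bool) (en : ι → Bool → V) (u : ι) (l : List ι) (y : V)
    (h : y ∈ ev x en (u :: l)) : ∃ v ∈ l.dropLast, ∃ s, y = en v s := by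
  induction l generalizing u with
  | nil => simp [ev] at h
  | cons v l ih =>
    match l with
    | [] => simp [ev] at h
    | w :: l =>
      rw [ev, List.mem_append] at h
      rcases h with h | h
      · refine ⟨v, by simp, ?_⟩
        split_ifs at h
        · simp at h; exact ⟨_, h⟩
        · simp at h; rcases h with h | h <;> exact ⟨_, h⟩
      · obtain ⟨v', h1, s, h2⟩ := ih _ h
        exact ⟨v', by simp [h1], s, h2⟩

theorem ev_nodup (x : ι → ι → Bool) (en : ι → Bool → V)
    (hinj : ∀ i j s s', en i s = en j s' → i = j ∧ s = s') (u : ι) (l : List ι)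
    (h : l.dropLast.Nodup) : (ev x en (u :: l)).Nodup := by
  induction l generalizing u with
  | nil => simp [ev]
  | cons v l ih =>
    match l with
    | [] => simp [ev]
    | w :: l =>
      rw [List.dropLast_cons_of_ne_nil (by simp), List.nodup_cons] at h
      rw [ev, List.nodup_append]
      refine ⟨?_, ih _ h.2, ?_⟩
      · split_ifs with hx
        · simp
        · simp only [List.nodup_cons, List.mem_singleton, List.not_mem_nil, not_false_eq_true,
            List.nodup_nil, and_self, and_true]
          intro e
          exact hx (hinj _ _ _ _ e).2
      · intro a ha b hb e
        subst e
        obtain ⟨v', h1, s, rfl⟩ := ev_mem _ _ _ _ _ hb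
        have : v' = v := by
          split_ifs at ha
          · simp at ha; exact (hinj _ _ _ _ ha).1
          · simp at ha; rcases ha with ha | ha <;> exact (hinj _ _ _ _ ha).1
        exact h.1 (this ▸ h1)

theorem ev_last (x : ι → ι → Bool) (en : ι → Bool → V) (A : List ι) (p q r : ι) :
    (ev x en (A ++ [p, q, r])).getLast? = some (en q (x q r)) := by
  induction A with
  | nil =>
    simp only [List.nil_append, ev, List.append_nil]
    split_ifs with h <;> simp [h]
  | cons a A ih =>
    obtain ⟨b, c, l, hl⟩ : ∃ b c l, A ++ [p, q, r] = b :: c :: l := by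
      match A with
      | [] => exact ⟨_, _, _, rfl⟩
      | [b] => exact ⟨_, _, _, rfl⟩
      | b :: c :: A => exact ⟨_, _, _, rfl⟩
    rw [List.cons_append, hl, ev, ← hl, List.getLast?_append, ih]
    rfl

theorem ev_walk (G : SimpleGraph V) (x : ι → ι → Bool) (en : ι → Bool → V)
    (hg : ∀ i s s', s ≠ s' → G.Adj (en i s) (en i s'))
    (hl : ∀ i j, i ≠ j → G.Adj (en i (x i j)) (en j (x j i)))
    (u v : ι) (l : List ι) (h1 : (v :: l).dropLast.Nodup) (h2 : l ≠ [] → u ≠ v) :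
    ∃ (e : V) (p : G.Walk (en u (x u v)) e), p.support = en u (x u v) :: ev x en (u :: v :: l) := by
  induction l generalizing u v with
  | nil => exact ⟨_, SimpleGraph.Walk.nil, by simp [ev]⟩
  | cons w l ih =>
    rw [List.dropLast_cons_of_ne_nil (by simp), List.nodup_cons] at h1
    obtain ⟨e, p, hp⟩ := ih v w h1.2 (by
      intro hne hvw
      apply h1.1
      rw [List.dropLast_cons_of_ne_nil hne]
      simp [hvw])
    have a1 := hl u v (h2 (by simp))
    by_cases hx : x v u = x v w
    · have a2 : G.Adj (en u (x u v)) (en v (x v w)) := hx ▸ a1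
      refine ⟨e, SimpleGraph.Walk.cons a2 p, ?_⟩
      rw [SimpleGraph.Walk.support_cons, hp, ev, if_pos hx, hx]
      rfl
    · refine ⟨e, SimpleGraph.Walk.cons a1 (SimpleGraph.Walk.cons (hg v _ _ hx) p), ?_⟩
      rw [SimpleGraph.Walk.support_cons, SimpleGraph.Walk.support_cons, hp, ev, if_neg hx]
      rfl

theorem isCycle_of {G : SimpleGraph V} {a : V} (p : G.Walk a a) (hn : p.support.tail.Nodup)
    (h3 : 3 ≤ p.length) : p.IsCycle := by
  cases p with
  | nil => simp at h3
  | cons h p =>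
    rw [SimpleGraph.Walk.cons_isCycle_iff]
    rw [SimpleGraph.Walk.support_cons, List.tail_cons] at hn
    have hp : p.IsPath := (SimpleGraph.Walk.isPath_def p).2 hn
    refine ⟨hp, fun he => ?_⟩
    have := hp
    rw [SimpleGraph.Walk.length_cons] at h3
    cases p with
    | nil => simp at h3
    | cons h' q =>
      rw [SimpleGraph.Walk.edges_cons, List.mem_cons] at he
      rw [SimpleGraph.Walk.cons_isPath_iff] at hp
      rcases he with he | he
      · simp only [Sym2.eq, Sym2.rel_iff', Prod.mk.injEq, Prod.swap_prod_mk] at he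
        rcases he with ⟨e1, e2⟩ | ⟨e1, e2⟩
        · exact h.ne e1
        · subst e1
          cases q with
          | nil => simp at h3
          | cons h'' q' =>
            have := hp.1
            rw [SimpleGraph.Walk.isPath_iff_eq_nil] at this
            simp at this
      · exact hp.2 (SimpleGraph.Walk.snd_mem_support_of_mem_edges _ he)

theorem realize (G : SimpleGraph V) (x : ι → ι → Bool) (en : ι → Bool → V)
    (hinj : ∀ i j s s', en i s = en j s' → i = j ∧ s = s')
    (hg : ∀ i s s', s ≠ s' → G.Adj (en i s) (en i s'))
    (hl : ∀ i j, i ≠ j → G.Adj (en i (x i j)) (en j (x j i)))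
    (l : List ι) (hn : l.Nodup) (h3 : 3 ≤ l.length) :
    ∃ (v : V) (c : G.Walk v v), c.IsCycle ∧ (c.length : ℤ) = cc x l := by
  match l, hn, h3 with
  | a :: b :: c :: M, hn, h3 =>
    have hnd : (b :: (c :: M ++ [a, b])).dropLast.Nodup := by
      rw [show b :: (c :: M ++ [a, b]) = (b :: c :: M ++ [a]) ++ [b] by simp,
        List.dropLast_concat]
      have : (b :: c :: M ++ [a]).Perm (a :: b :: c :: M) := List.perm_append_singleton _ _
      exact this.nodup_iff.2 hn
    obtain ⟨e, p, hp⟩ := ev_walk G x en hg hl a b (c :: M ++ [a, b]) hnd (by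
      intro _ hab
      simp [hab] at hn)
    have hee : e = en a (x a b) := by
      have h1 : p.support.getLast? = some e := by
        rw [List.getLast?_eq_some_getLast (by simp), SimpleGraph.Walk.getLast_support]
      obtain ⟨A, q, hA⟩ : ∃ A q, c :: M = A ++ [q] :=
        ⟨_, _, (List.dropLast_append_getLast (l := c :: M) (by simp)).symm⟩
      have h2 := ev_last x en (a :: b :: A) q a b
      rw [show (a :: b :: A) ++ [q, a, b] = a :: b :: (c :: M ++ [a, b]) by rw [hA]; simp] at h2
      rw [hp, List.getLast?_cons, h2] at h1
      simpa using h1.symm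
    subst hee
    have hlen : (p.length : ℤ) = cc x (a :: b :: c :: M) := by
      have h1 := congrArg List.length hp
      rw [SimpleGraph.Walk.length_support, List.length_cons] at h1
      have h2 := ev_length x en (a :: b :: (c :: M ++ [a, b]))
      rw [cc]
      simp only [List.take, List.cons_append] at h2 ⊢
      rw [← h2]
      simp only [List.cons_append] at h1
      omega
    refine ⟨_, p, isCycle_of p ?_ ?_, hlen⟩
    · rw [hp, List.tail_cons]
      exact ev_nodup x en hinj _ _ hnd
    · have e0 : ∀ y z : Bool, 0 ≤ nb y z := fun y z => (by revert y z; decide)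
      have pos : ∀ l : List ι, 0 ≤ pc x l := fun l => by
        have := ev_length x en l
        omega
      have : (3 : ℤ) ≤ cc x (a :: b :: c :: M) := by
        rw [cc]
        match M with
        | [] =>
          simp only [List.take, List.cons_append, List.nil_append, pc]
          have i1 := e0 (x b a) (x b c)
          have i2 := e0 (x c b) (x c a)
          have i3 := e0 (x a c) (x a b)
          linarith
        | d :: M =>
          simp only [List.take, List.cons_append, List.nil_append, pc]
          obtain ⟨f, M', hM⟩ : ∃ f M', M ++ [a, b] = f :: M' := by
            match M with
            | [] => exact ⟨_, _, rfl⟩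
            | m :: M => exact ⟨_, _, rfl⟩
          rw [hM]
          simp only [pc]
          have i1 := e0 (x b a) (x b c)
          have i2 := e0 (x c b) (x c d)
          have i3 := e0 (x d c) (x d f)
          have := pos (d :: f :: M')
          linarith
      omega

end Realize

section Matching
variable {V : Type*} [Fintype V] [DecidableEq V]

/-- Pairwise disjoint edges of `S`. -/
def IsMat (S M : Finset (Sym2 V)) : Prop :=
  M ⊆ S ∧ ∀ e ∈ M, ∀ f ∈ M, ∀ v, v ∈ e → v ∈ f → e = f

theorem IsMat.insert {S M : Finset (Sym2 V)} (h : IsMat S M) {f : Sym2 V} (hf : f ∈ S)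
    (hd : ∀ e ∈ M, ∀ v, v ∈ e → v ∉ f) : IsMat S (Insert.insert f M) := by
  refine ⟨Finset.insert_subset hf h.1, ?_⟩
  intro e he g hg v hve hvg
  rw [Finset.mem_insert] at he hg
  rcases he with rfl | he <;> rcases hg with rfl | hg
  · rfl
  · exact absurd hve (hd g hg v hvg)
  · exact absurd hvg (hd e he v hve)
  · exact h.2 e he g hg v hve hvg

theorem mat_bound (G : SimpleGraph V) [DecidableRel G.Adj] (S : Finset (Sym2 V))
    (hS : (↑S : Set (Sym2 V)) ⊆ G.edgeSet) (M : Finset (Sym2 V)) (hM : IsMat S M)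
    (hmax : ∀ N, IsMat S N → N.card ≤ M.card) :
    S.card ≤ M.card * G.maxDegree + M.card * M.card := by
  classical
  let I : V → Finset V := fun b =>
    Finset.univ.filter (fun y => s(b, y) ∈ S ∧ ∀ e ∈ M, y ∉ e)
  have hI : ∀ b y, y ∈ I b ↔ s(b, y) ∈ S ∧ ∀ e ∈ M, y ∉ e := by
    intro b y; simp [I]
  have key : ∀ p q, s(p, q) ∈ M → ¬ (1 < (I p).card ∧ 1 < (I q).card) := by
    rintro p q he ⟨h1, h2⟩
    have hpq : p ≠ q := by
      have : G.Adj p q := hS (hM.1 he)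
      exact this.ne
    obtain ⟨y, hy⟩ : (I p).Nonempty := Finset.card_pos.mp (by omega)
    obtain ⟨y', hy', hne⟩ := Finset.exists_mem_ne h2 y
    rw [hI] at hy hy'
    have hyp : ∀ z, (∀ e ∈ M, z ∉ e) → z ≠ p ∧ z ≠ q := by
      intro z hz
      have := hz _ he
      simpa [Sym2.mem_iff] using this
    have a1 := hyp y hy.2
    have a2 := hyp y' hy'.2
    have m0 : IsMat S (M.erase s(p, q)) :=
      ⟨(Finset.erase_subset _ _).trans hM.1, fun e he f hf v =>
        hM.2 e (Finset.mem_of_mem_erase he) f (Finset.mem_of_mem_erase hf) v⟩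
    have d : ∀ u z, u ∈ s(p, q) → (∀ e ∈ M, z ∉ e) →
        ∀ e ∈ M.erase s(p, q), ∀ v, v ∈ e → v ∉ s(u, z) := by
      intro u z hu hz e hee v hv hv'
      rw [Finset.mem_erase] at hee
      rcases Sym2.mem_iff.mp hv' with rfl | rfl
      · exact hee.1 (hM.2 e hee.2 _ he v hv hu)
      · exact hz e hee.2 hv
    have m1 := m0.insert hy.1 (d p y (by simp) hy.2)
    have m2 := m1.insert hy'.1 (by
      intro e hee v hv hv'
      rw [Finset.mem_insert] at hee
      rcases hee with rfl | hee
      · rcases Sym2.mem_iff.mp hv with rfl | rfl <;>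
          rcases Sym2.mem_iff.mp hv' with h | h
        · exact hpq h
        · exact a2.1 h.symm
        · exact a1.2 h
        · exact hne h.symm
      · exact d q y' (by simp) hy'.2 e hee v hv hv')
    have c := hmax _ m2
    rw [Finset.card_insert_of_notMem, Finset.card_insert_of_notMem,
      Finset.card_erase_of_mem he] at c
    · have : 0 < M.card := Finset.card_pos.mpr ⟨_, he⟩
      omega
    · intro h
      exact hy.2 _ (Finset.mem_of_mem_erase h) (by simp)
    · intro h
      rw [Finset.mem_insert] at h
      rcases h with h | h
      · have : q ∈ s(p, y) := h ▸ (by simp)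
        rcases Sym2.mem_iff.mp this with h | h
        · exact hpq h.symm
        · exact a1.2 h.symm
      · exact hy'.2 _ (Finset.mem_of_mem_erase h) (by simp)
  have ch : ∀ e : Sym2 V, ∃ ab : V × V, e = s(ab.1, ab.2) ∧ (e ∈ M → (I ab.2).card ≤ 1) := by
    intro e
    induction e using Sym2.ind with
    | _ p q =>
      by_cases h : 1 < (I q).card
      · refine ⟨(q, p), Sym2.eq_swap, fun he => ?_⟩
        have := key p q he
        simp only
        by_contra h'
        exact this ⟨by omega, h⟩
      · exact ⟨(p, q), rfl, fun _ => by simpa using h⟩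
  choose ab hab hI1 using ch
  have hsub : S ⊆ (M.biUnion fun e => (G.neighborFinset (ab e).1).image fun y => s((ab e).1, y)) ∪
      (M.biUnion fun e => (((M.erase e).image fun f => (ab f).2) ∪ I (ab e).2).image
        fun y => s((ab e).2, y)) := by
    have main : ∀ u v e, s(u, v) ∈ S → e ∈ M → u ∈ e → s(u, v) ∈
      (M.biUnion fun e => (G.neighborFinset (ab e).1).image fun y => s((ab e).1, y)) ∪
      (M.biUnion fun e => (((M.erase e).image fun f => (ab f).2) ∪ I (ab e).2).image
        fun y => s((ab e).2, y)) := by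
      intro u v e huv he hu
      have hadj : G.Adj u v := hS huv
      rw [hab e, Sym2.mem_iff] at hu
      rcases hu with hu | hu
      · apply Finset.mem_union_left
        rw [Finset.mem_biUnion]
        refine ⟨e, he, Finset.mem_image.mpr ⟨v, ?_, by rw [hu]⟩⟩
        rw [SimpleGraph.mem_neighborFinset, ← hu]; exact hadj
      · by_cases hv : ∃ f ∈ M, v ∈ f
        · obtain ⟨f, hf, hvf⟩ := hv
          rw [hab f, Sym2.mem_iff] at hvf
          rcases hvf with hvf | hvf
          · apply Finset.mem_union_left
            rw [Finset.mem_biUnion]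
            refine ⟨f, hf, Finset.mem_image.mpr ⟨u, ?_, by rw [← hvf]; exact Sym2.eq_swap⟩⟩
            rw [SimpleGraph.mem_neighborFinset, ← hvf]; exact hadj.symm
          · apply Finset.mem_union_right
            rw [Finset.mem_biUnion]
            refine ⟨e, he, Finset.mem_image.mpr ⟨v, ?_, by rw [hu]⟩⟩
            apply Finset.mem_union_left
            refine Finset.mem_image.mpr ⟨f, Finset.mem_erase.mpr ⟨?_, hf⟩, hvf.symm⟩
            rintro rfl
            exact hadj.ne (hu.trans hvf.symm)
        · push Not at hv
          apply Finset.mem_union_right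
          rw [Finset.mem_biUnion]
          refine ⟨e, he, Finset.mem_image.mpr ⟨v, ?_, by rw [hu]⟩⟩
          apply Finset.mem_union_right
          rw [hI, ← hu]
          exact ⟨huv, hv⟩
    intro f hf
    by_cases h : ∃ e ∈ M, ∃ v ∈ f, v ∈ e
    · obtain ⟨e, he, u, huf, hue⟩ := h
      obtain ⟨v, rfl⟩ := Sym2.mem_iff_exists.mp huf
      exact main u v e hf he hue
    · exfalso
      push Not at h
      have c := hmax _ (hM.insert hf (fun e he v hve hvf => h e he v hvf hve))
      rw [Finset.card_insert_of_notMem] at c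
      · omega
      · intro hfM
        have hm : (ab f).1 ∈ f := Sym2.mem_iff_exists.mpr ⟨_, hab f⟩
        exact h f hfM (ab f).1 hm hm
  refine (Finset.card_le_card hsub).trans ((Finset.card_union_le _ _).trans (add_le_add ?_ ?_))
  · refine Finset.card_biUnion_le_card_mul _ _ _ fun e _ => ?_
    exact Finset.card_image_le.trans (by
      rw [SimpleGraph.card_neighborFinset_eq_degree]; exact G.degree_le_maxDegree _)
  · refine Finset.card_biUnion_le_card_mul _ _ _ fun e he => ?_
    refine Finset.card_image_le.trans ((Finset.card_union_le _ _).trans ?_)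
    have h1 : ((M.erase e).image fun f => (ab f).2).card ≤ M.card - 1 := by
      refine Finset.card_image_le.trans ?_
      rw [Finset.card_erase_of_mem he]
    have h2 := hI1 e he
    have : 0 < M.card := Finset.card_pos.mpr ⟨_, he⟩
    omega

theorem exists_max_mat (S : Finset (Sym2 V)) :
    ∃ M, IsMat S M ∧ ∀ N, IsMat S N → N.card ≤ M.card := by
  classical
  obtain ⟨M, hM, h⟩ := Finset.exists_max_image (S.powerset.filter (IsMat S)) Finset.card
    ⟨∅, by simp [IsMat]⟩
  rw [Finset.mem_filter] at hM
  refine ⟨M, hM.2, fun N hN => h N ?_⟩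
  rw [Finset.mem_filter, Finset.mem_powerset]
  exact ⟨hN.1, hN⟩

end Matching

theorem stmt18_aux {V : Type*} [Fintype V] [DecidableEq V] (G : SimpleGraph V)
    (k : ℕ) (hk : 3 ≤ k) (hc2k : CycleFree G (2 * k))
    (S : Finset (Sym2 V)) (hS : IsStrongClique G ↑S) (M : Finset (Sym2 V)) (hM : IsMat S M)
    (hc : 2 * k ≤ M.card) : False := by
  classical
  obtain ⟨N, hNM, hN⟩ := Finset.exists_subset_card_eq hc
  let σ : Fin (2 * k) ≃ N := (N.equivFinOfCardEq hN).symm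
  have ch : ∀ e : Sym2 V, ∃ ab : V × V, e = s(ab.1, ab.2) := by
    intro e
    induction e using Sym2.ind with
    | _ p q => exact ⟨(p, q), rfl⟩
  choose ab hab using ch
  let en : Fin (2 * k) → Bool → V := fun i s =>
    if s then (ab (σ i).1).1 else (ab (σ i).1).2
  have hmem : ∀ i v, v ∈ (σ i).1 ↔ ∃ s, v = en i s := by
    intro i v
    conv_lhs => rw [hab (σ i).1]
    simp [en, Sym2.mem_iff, or_comm]
  have hMi : ∀ i, (σ i).1 ∈ M := fun i => hNM (σ i).2
  have hadj : ∀ i, G.Adj (en i true) (en i false) := by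
    intro i
    have h := hS.1 (hM.1 (hMi i))
    rw [hab (σ i).1] at h
    simpa [en] using h
  have hg : ∀ i s s', s ≠ s' → G.Adj (en i s) (en i s') := by
    intro i s s' h
    cases s <;> cases s' <;> simp at h
    · exact (hadj i).symm
    · exact hadj i
  have hij : ∀ i j s s', en i s = en j s' → i = j := by
    intro i j s s' h
    have := hM.2 _ (hMi i) _ (hMi j) (en i s) ((hmem _ _).2 ⟨s, rfl⟩) ((hmem _ _).2 ⟨s', h⟩)
    exact σ.injective (Subtype.ext this)
  have hinj : ∀ i j s s', en i s = en j s' → i = j ∧ s = s' := by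
    intro i j s s' h
    obtain rfl := hij i j s s' h
    refine ⟨rfl, ?_⟩
    by_contra hne
    exact (hg i s s' hne).ne h
  have hL : ∀ i j, ∃ p : Bool × Bool, i ≠ j → G.Adj (en i p.1) (en j p.2) := by
    intro i j
    obtain ⟨a, b, ha, hb, h⟩ := hS.2 _ (hM.1 (hMi i)) _ (hM.1 (hMi j))
    obtain ⟨s, rfl⟩ := (hmem _ _).1 ha
    obtain ⟨s', rfl⟩ := (hmem _ _).1 hb
    refine ⟨(s, s'), fun hne => ?_⟩
    rcases h with h | h
    · exact absurd (hij _ _ _ _ h) hne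
    · exact h
  choose L hL using hL
  let x : Fin (2 * k) → Fin (2 * k) → Bool := fun i j => if i < j then (L i j).1 else (L j i).2
  have hl : ∀ i j, i ≠ j → G.Adj (en i (x i j)) (en j (x j i)) := by
    intro i j hne
    rcases lt_or_gt_of_ne hne with h | h
    · simp only [x, if_pos h, if_neg h.not_gt]
      exact hL i j hne
    · simp only [x, if_pos h, if_neg h.not_gt]
      exact (hL j i hne.symm).symm
  obtain ⟨l, hn, h3, hcc⟩ := main_comb x (by simp) (by simp; omega)
  obtain ⟨v, c, hcyc, hlen⟩ := realize G x en hinj hg hl l hn h3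
  rw [hcc, Fintype.card_fin] at hlen
  exact hc2k v c hcyc (by exact_mod_cast hlen)

theorem stmt18 {V : Type*} [Fintype V] [DecidableEq V] (G : SimpleGraph V)
    [DecidableRel G.Adj] (k : ℕ) (hk : 3 ≤ k)
    (hc2k : CycleFree G (2 * k)) (hΔ : 1 ≤ G.maxDegree)
    (S : Finset (Sym2 V)) (hS : IsStrongClique G ↑S) :
    (S.card : ℤ) ≤ (2 * k - 1) * G.maxDegree + (2 * k - 1) ^ 2 := by
  obtain ⟨M, hM, hmax⟩ := exists_max_mat S
  have hb := mat_bound G S hS.1 M hM hmax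
  by_cases hc : 2 * k ≤ M.card
  · exact (stmt18_aux G k hk hc2k S hS M hM hc).elim
  · have h1 : (M.card : ℤ) ≤ 2 * k - 1 := by omega
    have h2 : (S.card : ℤ) ≤ M.card * G.maxDegree + M.card * M.card := by exact_mod_cast hb
    have h3 : (M.card : ℤ) * G.maxDegree ≤ (2 * k - 1) * G.maxDegree :=
      mul_le_mul_of_nonneg_right h1 (by positivity)
    have h4 : (M.card : ℤ) * M.card ≤ (2 * k - 1) * (2 * k - 1) :=
      mul_le_mul h1 h1 (by positivity) (by omega)
    rw [sq]
    linarith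
end

section
/- For every integer k ≥ 3, if G is a C_{2k}-free graph with Δ(G) ≥ 1, then the strong clique number of G is at most (2k−1)(4Δ(G)+1)/3. -/
namespace SC
/-- type, label and letter for the first extra, label and letter for the second -/
abbrev Nd := Bool × Bool × Bool × Bool × Bool

def bn (b : Bool) : ℕ := cond b 1 0

/-- rules for a single extra; `t l c` data -/
def g (l c t' l' c' : Bool) : ℕ :=
  1 + bn (xor c c') + bn l + bn (xor l' t')

/-- node data of extra number `s` -/
def lab (s : Bool) (x : Nd) : Bool := cond s x.2.1 x.2.2.2.1
def let' (s : Bool) (x : Nd) : Bool := cond s x.2.2.1 x.2.2.2.2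

def gg (s : Bool) (x y : Nd) : ℕ := g (lab s x) (let' s x) y.1 (lab s y) (let' s y)

def r1 (s : Bool) (x y : Nd) : Bool :=
  !(Nat.beq (gg s x y) (bn x.1 + bn y.1)) && !(Nat.beq (gg s x y) (2 + bn x.1 + bn y.1))
def r2 (s : Bool) (x y z : Nd) : Bool :=
  !(Nat.beq (gg s x z) (3 + bn x.1 + bn y.1 + bn z.1))
def r3 (s : Bool) (x y z u : Nd) : Bool :=
  !(Nat.beq (gg s x u) (4 + bn x.1 + bn y.1 + bn z.1 + bn u.1))
def r4s (s : Bool) (x y z : Nd) : Bool :=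
  !(Nat.beq (1 + bn (xor (let' s x) (let' s y)) + bn (lab s x)
     + 1 + bn (xor (let' (!s) y) (let' (!s) z)) + bn (xor (lab (!s) z) z.1)
     + bn (xor (lab s y) (lab (!s) y))) (2 + bn x.1 + bn y.1 + bn z.1))
def r4n (s : Bool) (x y z u : Nd) : Bool :=
  !(Nat.beq (gg s x y + gg (!s) z u) (2 + bn x.1 + bn y.1 + bn z.1 + bn u.1))

/-- all later gaps -/
def far (s : Bool) (x y : Nd) : List Nd → Bool
  | [] => true
  | z :: w => (match w with
    | [] => true
    | u :: _ => r4n s x y z u) && far s x y w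

def one (s : Bool) (x : Nd) : List Nd → Bool
  | [] => true
  | y :: w => r1 s x y && (match w with
    | [] => true
    | z :: w' => r2 s x y z && (match w' with
      | [] => true
      | u :: _ => r3 s x y z u))

def two (s : Bool) (x : Nd) : List Nd → Bool
  | [] => true
  | y :: w => far s x y w && (match w with
    | [] => true
    | z :: _ => r4s s x y z)

def okc (x : Nd) (w : List Nd) : Bool :=
  one true x w && (one false x w && (two true x w && two false x w))

def lin : List Nd → Bool
  | [] => true
  | x :: w => lin w && okc x w

def rots : ℕ → List Nd → Bool
  | 0, _ => true
  | k+1, w => lin w && (match w with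
     | [] => true
     | x :: w' => rots k (w' ++ [x]))

def wtw : List Nd → ℕ
  | [] => 0
  | x :: w => 1 + bn x.1 + wtw w

def cycBad (w : List Nd) : Bool :=
  match w with
  | x :: y :: z :: w' => Nat.beq (wtw w) 5 || !(rots w.length (y :: z :: w' ++ [x]))
  | _ => true

def bb : List Bool := [true, false]

def srch : ℕ → List Nd → Bool
  | 0, _ => false
  | k+1, w => cycBad w && bb.all fun t => bb.all fun l => bb.all fun c =>
      !(one true (t,l,c,false,false) w) || bb.all fun l' => bb.all fun c' =>
      !(okc (t,l,c,l',c') w) || srch k ((t,l,c,l',c') :: w)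

theorem srch_true : (bb.all fun t => bb.all fun l => bb.all fun l' =>
   srch 13 [(t,l,false,l',false)]) = true := by
  decide +kernel
end SC

namespace SC
section KC
variable {ι : Type*} (col : ι → ι → Bool)

/-- decorated nodes: index, left colour, right colour -/
def Rl (x y : ι × Bool × Bool) : Prop := x.2.2 = col x.1 y.1 ∧ y.2.1 = col y.1 x.1

def wt (x : ι × Bool × Bool) : ℕ := 1 + bn (xor x.2.1 x.2.2)

structure Good (n : ℕ) (L : List (ι × Bool × Bool)) : Prop where
  len : 3 ≤ L.length
  nd : (L.map Prod.fst).Nodup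
  ch : Cycle.Chain (Rl col) (L : Cycle (ι × Bool × Bool))
  sm : (L.map wt).sum = n

variable {col}

theorem Good.rot {n : ℕ} {A B : List (ι × Bool × Bool)} (h : Good col n (A ++ B)) :
    Good col n (B ++ A) where
  len := by have := h.len; simp at this ⊢; omega
  nd := by
    have := h.nd
    rw [List.map_append] at this ⊢
    exact List.nodup_append_comm.1 this
  ch := by
    have : ((B ++ A : List (ι × Bool × Bool)) : Cycle (ι × Bool × Bool)) = (A ++ B : List _) :=
      Cycle.coe_eq_coe.2 ⟨B.length, by simp⟩
    rw [this]; exact h.ch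
  sm := by have := h.sm; simp at this ⊢; omega

theorem chain_iff (q p : ι × Bool × Bool) (M : List (ι × Bool × Bool)) :
    Cycle.Chain (Rl col) ((q :: (M ++ [p]) : List _) : Cycle (ι × Bool × Bool)) ↔
      List.IsChain (Rl col) (q :: (M ++ [p])) ∧ Rl col p q := by
  rw [Cycle.chain_coe_cons, List.append_assoc]
  have : q :: (M ++ ([p] ++ [q])) = (q :: M) ++ p :: [q] := by simp
  rw [this]
  have : q :: (M ++ [p]) = (q :: M) ++ [p] := by simp
  rw [this, List.isChain_append_cons_cons (l₂ := [])]
  simp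

theorem setR (L : List (ι × Bool × Bool)) (u : ι) (a b b' : Bool)
    (h : List.IsChain (Rl col) (L ++ [(u, a, b)])) : List.IsChain (Rl col) (L ++ [(u, a, b')]) := by
  rw [List.isChain_append] at h ⊢
  simpa [Rl] using h

theorem setL (L : List (ι × Bool × Bool)) (u : ι) (a b a' : Bool)
    (h : List.IsChain (Rl col) ((u, a, b) :: L)) : List.IsChain (Rl col) ((u, a', b) :: L) := by
  rw [List.isChain_cons] at h ⊢
  simpa [Rl] using h

theorem ends (M : List (ι × Bool × Bool)) (u v : ι) (a b c d a' d' : Bool)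
    (h : List.IsChain (Rl col) ((u, a, b) :: (M ++ [(v, c, d)]))) :
    List.IsChain (Rl col) ((u, a', b) :: (M ++ [(v, c, d')])) := by
  have := setL _ _ _ _ a' h
  rw [← List.cons_append] at this ⊢
  exact setR _ _ _ _ _ this

/-- generic one-extra splice -/
theorem repl {n : ℕ} {M Z : List (ι × Bool × Bool)} {q p e : ι} {lq rq lp rp : Bool}
    (h : Good col n ((q, lq, rq) :: (M ++ [(p, lp, rp)]) ++ Z))
    (he : e ∉ ((q, lq, rq) :: (M ++ [(p, lp, rp)]) ++ Z).map Prod.fst) :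
    Good col (1 + bn (xor (col e p) (col e q)) + (1 + bn (xor (col q e) rq))
       + (1 + bn (xor lp (col p e))) + (M.map wt).sum)
     ((q, col q e, rq) :: ((M ++ [(p, lp, col p e)]) ++ [(e, col e p, col e q)])) where
  len := by simp
  nd := by
    have h1 := h.nd
    simp only [List.map_append, List.map_cons, List.map_nil, List.mem_append] at h1 he ⊢
    have h2 := (List.nodup_append.1 h1).1
    rw [← List.cons_append, List.nodup_append_comm]
    simp only [List.singleton_append]
    exact List.nodup_cons.2 ⟨fun hh => he (Or.inl hh), h2⟩
  ch := by
    have h1 := h.ch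
    rw [chain_iff]
    refine ⟨?_, by simp [Rl]⟩
    have h2 : List.IsChain (Rl col) ((q, lq, rq) :: (M ++ [(p, lp, rp)])) := by
      rw [List.cons_append, Cycle.chain_coe_cons] at h1
      have : (q, lq, rq) :: (M ++ [(p, lp, rp)] ++ Z ++ [(q, lq, rq)]) =
        ((q, lq, rq) :: (M ++ [(p, lp, rp)])) ++ (Z ++ [(q, lq, rq)]) := by simp
      rw [this] at h1
      exact (List.isChain_append.1 h1).1
    have h3 := ends M q p lq rq lp rp (col q e) (col p e) h2
    rw [← List.cons_append, List.isChain_append]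
    refine ⟨h3, by simp, ?_⟩
    intro x hx y hy
    rw [← List.cons_append, List.getLast?_append] at hx
    simp at hx hy
    subst hx; subst hy; simp [Rl]
  sm := by
    simp [wt]; omega

theorem two_far {n : ℕ} {M N : List (ι × Bool × Bool)} {q p e q' p' f : ι}
    {lq rq lp rp lq' rq' lp' rp' : Bool}
    (h : Good col n ((q, lq, rq) :: (M ++ [(p, lp, rp)]) ++ ((q', lq', rq') :: (N ++ [(p', lp', rp')]))))
    (he : e ∉ ((q, lq, rq) :: (M ++ [(p, lp, rp)]) ++
      ((q', lq', rq') :: (N ++ [(p', lp', rp')]))).map Prod.fst)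
    (hf : f ∉ ((q, lq, rq) :: (M ++ [(p, lp, rp)]) ++
      ((q', lq', rq') :: (N ++ [(p', lp', rp')]))).map Prod.fst) (hef : e ≠ f) :
    Good col (1 + bn (xor (col e p) (col e q')) + (1 + bn (xor (col q f) rq))
       + (1 + bn (xor lp (col p e))) + (M.map wt).sum +
       (1 + bn (xor (col f p') (col f q)) + (1 + bn (xor (col q' e) rq'))
       + (1 + bn (xor lp' (col p' f))) + (N.map wt).sum))
     ((q, col q f, rq) :: (((M ++ [(p, lp, col p e)]) ++ ((e, col e p, col e q') ::
      (q', col q' e, rq') :: (N ++ [(p', lp', col p' f)]))) ++ [(f, col f p', col f q)])) where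
  len := by simp; try omega
  nd := by
    have h1 := h.nd
    classical
    have h2 := List.nodup_cons.2 ⟨by simpa using ⟨hef, by simpa using he⟩, List.nodup_cons.2 ⟨hf, h1⟩⟩
    refine (List.Perm.nodup_iff (List.perm_iff_count.2 fun a => ?_)).1 h2
    simp [List.count_cons, List.count_append]
    omega
  ch := by
    have h1 := h.ch
    rw [chain_iff]
    refine ⟨?_, by simp [Rl]⟩
    have h2 : List.IsChain (Rl col) ((q, lq, rq) :: (M ++ [(p, lp, rp)])) ∧
        List.IsChain (Rl col) ((q', lq', rq') :: (N ++ [(p', lp', rp')])) := by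
      rw [List.cons_append, Cycle.chain_coe_cons] at h1
      have : (q, lq, rq) :: (M ++ [(p, lp, rp)] ++ (q', lq', rq') :: (N ++ [(p', lp', rp')])
          ++ [(q, lq, rq)]) =
        ((q, lq, rq) :: (M ++ [(p, lp, rp)])) ++
          (((q', lq', rq') :: (N ++ [(p', lp', rp')])) ++ [(q, lq, rq)]) := by simp
      rw [this] at h1
      have h3 := (List.isChain_append.1 h1)
      exact ⟨h3.1, (List.isChain_append.1 h3.2.1).1⟩
    have h3 := ends M q p lq rq lp rp (col q f) (col p e) h2.1
    have h4 := ends N q' p' lq' rq' lp' rp' (col q' e) (col p' f) h2.2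
    have : (q, col q f, rq) :: (((M ++ [(p, lp, col p e)]) ++ ((e, col e p, col e q') ::
      (q', col q' e, rq') :: (N ++ [(p', lp', col p' f)]))) ++ [(f, col f p', col f q)]) =
      ((q, col q f, rq) :: (M ++ [(p, lp, col p e)])) ++ ([(e, col e p, col e q')] ++
      (((q', col q' e, rq') :: (N ++ [(p', lp', col p' f)])) ++ [(f, col f p', col f q)])) := by
        simp
    rw [this, List.isChain_append]
    refine ⟨h3, ?_, ?_⟩
    · rw [List.isChain_append]
      refine ⟨by simp, ?_, ?_⟩
      · rw [List.isChain_append]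
        refine ⟨h4, by simp, ?_⟩
        intro x hx y hy
        rw [← List.cons_append, List.getLast?_append] at hx
        simp at hx hy
        subst hx; subst hy; simp [Rl]
      · intro x hx y hy
        simp at hx hy
        subst hx; subst hy; simp [Rl]
    intro x hx y hy
    rw [← List.cons_append, List.getLast?_append] at hx
    simp at hx hy
    subst hx; subst hy; simp [Rl]
  sm := by
    simp [wt]; omega

theorem two_near {n : ℕ} {M : List (ι × Bool × Bool)} {q p e x f : ι}
    {lq rq lp rp lx rx : Bool}
    (h : Good col n ((q, lq, rq) :: (M ++ [(p, lp, rp)]) ++ [(x, lx, rx)]))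
    (he : e ∉ ((q, lq, rq) :: (M ++ [(p, lp, rp)]) ++ [(x, lx, rx)]).map Prod.fst)
    (hf : f ∉ ((q, lq, rq) :: (M ++ [(p, lp, rp)]) ++ [(x, lx, rx)]).map Prod.fst)
    (hef : e ≠ f) :
    Good col (1 + bn (xor (col e p) (col e x)) + (1 + bn (xor (col q f) rq))
       + (1 + bn (xor lp (col p e))) + (M.map wt).sum +
       (1 + bn (xor (col f x) (col f q)) + (1 + bn (xor (col x e) (col x f)))))
     ((q, col q f, rq) :: (((M ++ [(p, lp, col p e)]) ++ ([(e, col e p, col e x),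
      (x, col x e, col x f)])) ++ [(f, col f x, col f q)])) where
  len := by simp; try omega
  nd := by
    have h1 := h.nd
    classical
    have h2 := List.nodup_cons.2 ⟨by simpa using ⟨hef, by simpa using he⟩, List.nodup_cons.2 ⟨hf, h1⟩⟩
    refine (List.Perm.nodup_iff (List.perm_iff_count.2 fun a => ?_)).1 h2
    simp [List.count_cons, List.count_append]
    omega
  ch := by
    have h1 := h.ch
    rw [chain_iff]
    refine ⟨?_, by simp [Rl]⟩
    have h2 : List.IsChain (Rl col) ((q, lq, rq) :: (M ++ [(p, lp, rp)])) := by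
      rw [List.cons_append, Cycle.chain_coe_cons] at h1
      have : (q, lq, rq) :: (M ++ [(p, lp, rp)] ++ [(x, lx, rx)]
          ++ [(q, lq, rq)]) =
        ((q, lq, rq) :: (M ++ [(p, lp, rp)])) ++
          ([(x, lx, rx)] ++ [(q, lq, rq)]) := by simp
      rw [this] at h1
      exact (List.isChain_append.1 h1).1
    have h3 := ends M q p lq rq lp rp (col q f) (col p e) h2
    have : (q, col q f, rq) :: (((M ++ [(p, lp, col p e)]) ++ ([(e, col e p, col e x),
      (x, col x e, col x f)])) ++ [(f, col f x, col f q)]) =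
      ((q, col q f, rq) :: (M ++ [(p, lp, col p e)])) ++ [(e, col e p, col e x),
      (x, col x e, col x f), (f, col f x, col f q)] := by
        simp
    rw [this, List.isChain_append]
    refine ⟨h3, ?_, ?_⟩
    · simp [Rl]
    intro x hx y hy
    rw [← List.cons_append, List.getLast?_append] at hx
    simp at hx hy
    subst hx; subst hy; simp [Rl]
  sm := by
    simp [wt]; omega
end KC
end SC

namespace SC
section RL
variable {ι : Type*} {col : ι → ι → Bool}

theorem bx1 (a b c : Bool) : bn (xor (xor a b) (xor b c)) = bn (xor a c) := by
  cases a <;> cases b <;> cases c <;> rfl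
theorem bx2 (k a b : Bool) : bn (xor (xor k a) (xor k b)) = bn (xor a b) := by
  cases a <;> cases b <;> cases k <;> rfl
theorem bx3 (k a b : Bool) : bn (xor (xor a k) (xor b k)) = bn (xor a b) := by
  cases a <;> cases b <;> cases k <;> rfl
theorem bx4 (a b : Bool) : bn (xor a b) = bn (xor b a) := by
  cases a <;> cases b <;> rfl

/-- node data with extras `es true`, `es false` -/
def ndat (col : ι → ι → Bool) (es : Bool → ι) (ks : Bool → Bool) (x : ι × Bool × Bool) : Nd :=
  (xor x.2.1 x.2.2, xor (col x.1 (es true)) x.2.1, xor (ks true) (col (es true) x.1),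
    xor (col x.1 (es false)) x.2.1, xor (ks false) (col (es false) x.1))

variable (es : Bool → ι) (ks : Bool → Bool)

theorem lab_ndat (s : Bool) (x : ι × Bool × Bool) :
    lab s (ndat col es ks x) = xor (col x.1 (es s)) x.2.1 := by cases s <;> rfl
theorem let_ndat (s : Bool) (x : ι × Bool × Bool) :
    let' s (ndat col es ks x) = xor (ks s) (col (es s) x.1) := by cases s <;> rfl
theorem t_ndat (x : ι × Bool × Bool) :
    (ndat col es ks x).1 = xor x.2.1 x.2.2 := rfl

theorem gg_ndat (s : Bool) (x y : ι × Bool × Bool) :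
    gg s (ndat col es ks x) (ndat col es ks y) =
      1 + bn (xor (col (es s) x.1) (col (es s) y.1)) + bn (xor x.2.1 (col x.1 (es s)))
        + bn (xor (col y.1 (es s)) y.2.2) := by
  simp only [gg, g, lab_ndat, let_ndat, t_ndat, bx1, bx2]
  rw [bx4 (col x.1 (es s)) x.2.1]

/-- a stuck cycle: maximal number of nodes for its weight, no cycle of weight `n+2` -/
structure Stuck (col : ι → ι → Bool) (es : Bool → ι) (n j : ℕ) (L : List (ι × Bool × Bool)) :
    Prop where
  good : Good col n L
  out : ∀ s, es s ∉ L.map Prod.fst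
  ne : ∀ s, es s ≠ es (!s)
  len : L.length = j
  no : ∀ L', ¬ Good col (n + 2) L'
  mx : ∀ L', Good col n L' → L'.length ≤ j

variable {es} {n j : ℕ}

theorem Stuck.rot {A B : List (ι × Bool × Bool)} (h : Stuck col es n j (A ++ B)) :
    Stuck col es n j (B ++ A) where
  good := h.good.rot
  out := fun s => by have := h.out s; simp only [List.map_append, List.mem_append] at this ⊢; tauto
  ne := h.ne
  len := by have := h.len; simp at this ⊢; omega
  no := h.no
  mx := h.mx

theorem rule1 (s : Bool) {X Y : List (ι × Bool × Bool)} {x y : ι × Bool × Bool}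
    (h : Stuck col es n j (X ++ x :: y :: Y)) :
    r1 s (ndat col es ks x) (ndat col es ks y) = true := by
  have h1 : Stuck col es n j ((y :: ((Y ++ X) ++ [x])) ++ []) := by
    have : X ++ x :: y :: Y = (X ++ [x]) ++ (y :: Y) := by simp
    rw [this] at h
    simpa using h.rot
  obtain ⟨x, lx, rx⟩ := x
  obtain ⟨y, ly, ry⟩ := y
  have h2 := repl (e := es s) h1.good (h1.out s)
  have h3 := h1.good.sm
  have h4 := h1.len
  have h5 := h1.mx
  have h6 := h1.no
  simp [wt] at h3 h4
  simp only [r1, gg_ndat, t_ndat]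
  rw [Bool.and_eq_true]
  constructor
  · rw [Bool.not_eq_true', Bool.eq_false_iff]
    intro hb
    have hb := Nat.eq_of_beq_eq_true hb
    have := h5 _ (by convert h2 using 1; simp only [List.map_append, List.sum_append]; omega)
    simp at this
    omega
  · rw [Bool.not_eq_true', Bool.eq_false_iff]
    intro hb
    have hb := Nat.eq_of_beq_eq_true hb
    refine h6 _ (by convert h2 using 1; simp only [List.map_append, List.sum_append]; omega)

theorem rule2 (s : Bool) {X Y : List (ι × Bool × Bool)} {x y z : ι × Bool × Bool}
    (h : Stuck col es n j (X ++ x :: z :: y :: Y)) :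
    r2 s (ndat col es ks x) (ndat col es ks z) (ndat col es ks y) = true := by
  have h1 : Stuck col es n j ((y :: ((Y ++ X) ++ [x])) ++ [z]) := by
    have : X ++ x :: z :: y :: Y = (X ++ [x] ++ [z]) ++ (y :: Y) := by simp
    rw [this] at h
    simpa using h.rot
  obtain ⟨x, lx, rx⟩ := x
  obtain ⟨y, ly, ry⟩ := y
  have h2 := repl (e := es s) h1.good (h1.out s)
  have h3 := h1.good.sm
  have h6 := h1.no
  simp [wt] at h3
  simp only [r2, gg_ndat, t_ndat]
  rw [Bool.not_eq_true', Bool.eq_false_iff]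
  intro hb
  have hb := Nat.eq_of_beq_eq_true hb
  refine h6 _ (by convert h2 using 1; simp only [List.map_append, List.sum_append]; omega)

theorem rule3 (s : Bool) {X Y : List (ι × Bool × Bool)} {x y z u : ι × Bool × Bool}
    (h : Stuck col es n j (X ++ x :: z :: u :: y :: Y)) :
    r3 s (ndat col es ks x) (ndat col es ks z) (ndat col es ks u) (ndat col es ks y) = true := by
  have h1 : Stuck col es n j ((y :: ((Y ++ X) ++ [x])) ++ [z, u]) := by
    have : X ++ x :: z :: u :: y :: Y = (X ++ [x] ++ [z, u]) ++ (y :: Y) := by simp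
    rw [this] at h
    simpa using h.rot
  obtain ⟨x, lx, rx⟩ := x
  obtain ⟨y, ly, ry⟩ := y
  have h2 := repl (e := es s) h1.good (h1.out s)
  have h3 := h1.good.sm
  have h6 := h1.no
  simp [wt] at h3
  simp only [r3, gg_ndat, t_ndat]
  rw [Bool.not_eq_true', Bool.eq_false_iff]
  intro hb
  have hb := Nat.eq_of_beq_eq_true hb
  refine h6 _ (by convert h2 using 1; simp only [List.map_append, List.sum_append]; omega)

theorem rule4s (s : Bool) {X Y : List (ι × Bool × Bool)} {x y z : ι × Bool × Bool}
    (h : Stuck col es n j (X ++ x :: y :: z :: Y)) :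
    r4s s (ndat col es ks x) (ndat col es ks y) (ndat col es ks z) = true := by
  have h1 : Stuck col es n j ((z :: ((Y ++ X) ++ [x])) ++ [y]) := by
    have : X ++ x :: y :: z :: Y = (X ++ [x] ++ [y]) ++ (z :: Y) := by simp
    rw [this] at h
    simpa using h.rot
  obtain ⟨x, lx, rx⟩ := x
  obtain ⟨y, ly, ry⟩ := y
  obtain ⟨z, lz, rz⟩ := z
  have h2 := two_near (e := es s) (f := es !s) h1.good (h1.out s) (h1.out _) (h1.ne s)
  have h3 := h1.good.sm
  have h6 := h1.no
  simp [wt] at h3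
  simp only [r4s, let_ndat, lab_ndat, t_ndat, bx1, bx2, bx3]
  rw [Bool.not_eq_true', Bool.eq_false_iff]
  intro hb
  have hb := Nat.eq_of_beq_eq_true hb
  rw [bx4 (col x (es s)) lx] at hb
  refine h6 _ (by convert h2 using 1; simp only [List.map_append, List.sum_append]; omega)

theorem rule4n (s : Bool) {X Y Z : List (ι × Bool × Bool)} {x y z u : ι × Bool × Bool}
    (h : Stuck col es n j (X ++ x :: y :: (Y ++ z :: u :: Z))) :
    r4n s (ndat col es ks x) (ndat col es ks y) (ndat col es ks z) (ndat col es ks u) = true := by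
  have h1 : Stuck col es n j ((u :: ((Z ++ X) ++ [x])) ++ (y :: (Y ++ [z]))) := by
    have : X ++ x :: y :: (Y ++ z :: u :: Z) = (X ++ [x] ++ (y :: (Y ++ [z]))) ++ (u :: Z) := by simp
    rw [this] at h
    simpa using h.rot
  obtain ⟨x, lx, rx⟩ := x
  obtain ⟨y, ly, ry⟩ := y
  obtain ⟨z, lz, rz⟩ := z
  obtain ⟨u, lu, ru⟩ := u
  have h2 := two_far (e := es s) (f := es !s) h1.good (h1.out s) (h1.out _) (h1.ne s)
  have h3 := h1.good.sm
  have h6 := h1.no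
  simp [wt] at h3
  simp only [r4n, gg_ndat, t_ndat]
  rw [Bool.not_eq_true', Bool.eq_false_iff]
  intro hb
  have hb := Nat.eq_of_beq_eq_true hb
  refine h6 _ (by convert h2 using 1; simp only [List.map_append, List.sum_append]; omega)

theorem one_ok (s : Bool) {X Y : List (ι × Bool × Bool)} {x : ι × Bool × Bool}
    (h : Stuck col es n j (X ++ x :: Y)) :
    one s (ndat col es ks x) (Y.map (ndat col es ks)) = true := by
  match Y, h with
  | [], _ => rfl
  | [y], h => simp [one, rule1 ks s h]
  | [y, z], h => simp [one, rule1 ks s h, rule2 ks s h]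
  | y :: z :: u :: Y, h => simp [one, rule1 ks s h, rule2 ks s h, rule3 ks s h]

theorem far_ok (s : Bool) {x y : ι × Bool × Bool} : ∀ {X Y Z : List (ι × Bool × Bool)}
    (_ : Stuck col es n j (X ++ x :: y :: (Y ++ Z))),
    far s (ndat col es ks x) (ndat col es ks y) (Z.map (ndat col es ks)) = true
  | X, Y, [], _ => rfl
  | X, Y, [z], _ => rfl
  | X, Y, z :: u :: Z, h => by
    have h1 := rule4n ks s h
    have h2 : Stuck col es n j (X ++ x :: y :: ((Y ++ [z]) ++ (u :: Z))) := by simpa using h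
    have h3 := far_ok s h2
    simp only [List.map_cons] at h3 ⊢
    rw [far, h3]
    simp [h1]

theorem two_ok (s : Bool) {X Y : List (ι × Bool × Bool)} {x : ι × Bool × Bool}
    (h : Stuck col es n j (X ++ x :: Y)) :
    two s (ndat col es ks x) (Y.map (ndat col es ks)) = true := by
  match Y, h with
  | [], _ => rfl
  | [y], h => rfl
  | y :: z :: Y, h =>
    have := far_ok ks s (Y := []) (Z := z :: Y) h
    simp only [List.map_cons] at this ⊢
    rw [two, this]
    simp [rule4s ks s h]

theorem okc_ok {X Y : List (ι × Bool × Bool)} {x : ι × Bool × Bool}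
    (h : Stuck col es n j (X ++ x :: Y)) :
    okc (ndat col es ks x) (Y.map (ndat col es ks)) = true := by
  simp [okc, one_ok ks _ h, two_ok ks _ h]

theorem lin_ok : ∀ {X Y : List (ι × Bool × Bool)}
    (_ : Stuck col es n j (X ++ Y)), lin (Y.map (ndat col es ks)) = true
  | X, [], h => rfl
  | X, x :: Y, h => by
    have h1 := okc_ok ks h
    have h2 : Stuck col es n j ((X ++ [x]) ++ Y) := by simpa using h
    have h3 := lin_ok h2
    simp [lin, h1, h3]

theorem rots_ok : ∀ (k : ℕ) {L : List (ι × Bool × Bool)}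
    (_ : Stuck col es n j L), rots k (L.map (ndat col es ks)) = true
  | 0, L, h => rfl
  | k+1, [], h => rfl
  | k+1, x :: L, h => by
    have h1 := lin_ok ks (X := []) h
    have h2 : Stuck col es n j (L ++ [x]) := by
      have : x :: L = [x] ++ L := rfl
      rw [this] at h; exact h.rot
    have h3 := rots_ok k h2
    rw [List.map_cons] at h1 ⊢
    rw [rots, h1]
    simpa using h3

theorem wtw_eq : ∀ (L : List (ι × Bool × Bool)), wtw (L.map (ndat col es ks)) = (L.map wt).sum
  | [] => rfl
  | x :: L => by
    simp only [List.map_cons, wtw, t_ndat, wtw_eq L, List.sum_cons, wt]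

theorem cyc_ok {L : List (ι × Bool × Bool)} (h : Stuck col es n j L) (hn : n ≠ 5) :
    cycBad (L.map (ndat col es ks)) = false := by
  have hl := h.good.len
  have hw := wtw_eq (col := col) (es := es) ks L
  rw [h.good.sm] at hw
  match L, h with
  | x :: y :: z :: Y, h =>
    have h2 : Stuck col es n j ((y :: z :: Y) ++ [x]) := by
      have : x :: y :: z :: Y = [x] ++ (y :: z :: Y) := rfl
      rw [this] at h; exact h.rot
    have h3 := rots_ok ks (Y.length + 1 + 1 + 1) h2
    simp only [List.map_cons] at hw ⊢
    rw [cycBad, hw]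
    simp at h3
    simp only [h3, List.cons_append, List.length_cons, List.length_map, Bool.not_true,
      Bool.or_false]
    rw [Bool.eq_false_iff]
    exact fun hb => hn (Nat.eq_of_beq_eq_true hb)

theorem bb_all (p : Bool → Bool) (h : bb.all p = true) (b : Bool) : p b = true := by
  simp [bb] at h
  cases b <;> simp [h]

theorem srch_sound (hn : n ≠ 5) : ∀ (k : ℕ) {X Y : List (ι × Bool × Bool)}
    (_ : Stuck col es n j (X ++ Y)), srch k (Y.map (ndat col es ks)) = true → False
  | 0, X, Y, h, hs => by simp [srch] at hs
  | k+1, X, Y, h, hs => by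
    rw [srch, Bool.and_eq_true] at hs
    rcases List.eq_nil_or_concat X with rfl | ⟨X, x, rfl⟩
    · have := cyc_ok ks h hn
      simp only [List.nil_append] at this
      rw [this] at hs
      simp at hs
    · have h1 : Stuck col es n j (X ++ x :: Y) := by simpa using h
      have h2 := okc_ok ks h1
      have h3 := one_ok ks true h1
      have h4 := bb_all _ (bb_all _ (bb_all _ hs.2 (ndat col es ks x).1) (ndat col es ks x).2.1)
        (ndat col es ks x).2.2.1
      have h5 : one true ((ndat col es ks x).1, (ndat col es ks x).2.1, (ndat col es ks x).2.2.1,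
        false, false) (Y.map (ndat col es ks)) = true := h3
      rw [h5, Bool.not_true, Bool.false_or] at h4
      have h6 := bb_all _ (bb_all _ h4 (ndat col es ks x).2.2.2.1) (ndat col es ks x).2.2.2.2
      have h7 : okc ((ndat col es ks x).1, (ndat col es ks x).2.1, (ndat col es ks x).2.2.1,
        (ndat col es ks x).2.2.2.1, (ndat col es ks x).2.2.2.2) (Y.map (ndat col es ks)) = true := h2
      rw [h7, Bool.not_true, Bool.false_or] at h6
      exact srch_sound hn k h1 h6

theorem not_stuck (hn : n ≠ 5) {L : List (ι × Bool × Bool)} (h : Stuck col es n j L) : False := by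
  have hl := h.good.len
  rcases List.eq_nil_or_concat L with rfl | ⟨X, x, rfl⟩
  · simp at hl
  have h1 : Stuck col es n j (X ++ [x]) := by simpa using h
  let ks : Bool → Bool := fun s => col (es s) x.1
  refine srch_sound ks hn 13 h1 ?_
  have h4 := bb_all _ (bb_all _ (bb_all _ srch_true (ndat col es ks x).1) (ndat col es ks x).2.1)
        (ndat col es ks x).2.2.2.1
  have h5 : ndat col es ks x = ((ndat col es ks x).1, (ndat col es ks x).2.1, false,
    (ndat col es ks x).2.2.2.1, false) := by
    simp [ndat, ks]
  simp only [List.map_cons, List.map_nil]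
  rw [h5]
  exact h4

/-- the induction step -/
theorem step [Fintype ι] (hn : n ≠ 5) (hc : n + 2 ≤ Fintype.card ι)
    (h : ∃ L, Good col n L) : ∃ L, Good col (n + 2) L := by
  classical
  by_contra hno
  push Not at hno
  have hb : ∀ L, Good col n L → L.length ≤ n := by
    intro L hL
    rw [← hL.sm]
    have : ∀ L : List (ι × Bool × Bool), L.length ≤ (L.map wt).sum := by
      intro L
      induction L with
      | nil => simp
      | cons a L ih => simp [wt]; omega
    exact this L
  obtain ⟨L, hL, hmax⟩ : ∃ L, Good col n L ∧ ∀ L', Good col n L' → L'.length ≤ L.length := by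
    have hP : ∃ m, ∃ L, Good col n L ∧ L.length = m := by
      obtain ⟨L, hL⟩ := h; exact ⟨_, L, hL, rfl⟩
    obtain ⟨m, hm⟩ := hP
    have hm' : m ≤ n := by obtain ⟨L, hL, rfl⟩ := hm; exact hb L hL
    obtain ⟨L, hL, hl⟩ := Nat.findGreatest_spec (P := fun m => ∃ L, Good col n L ∧ L.length = m) hm' hm
    refine ⟨L, hL, fun L' hL' => ?_⟩
    rw [hl]
    exact Nat.le_findGreatest (hb L' hL') ⟨L', hL', rfl⟩
  have hcard : (L.map Prod.fst).toFinset.card ≤ n := by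
    refine (List.toFinset_card_le _).trans ?_
    simpa using hb L hL
  have h2 : 1 < ((L.map Prod.fst).toFinset)ᶜ.card := by
    rw [Finset.card_compl]; omega
  obtain ⟨e, he, f, hf, hef⟩ := Finset.one_lt_card.1 h2
  simp only [Finset.mem_compl, List.mem_toFinset] at he hf
  refine not_stuck (es := fun s => cond s e f) (j := L.length) hn
    ⟨hL, ?_, ?_, rfl, hno, hmax⟩
  · intro s; cases s <;> assumption
  · intro s; cases s
    · exact hef.symm
    · exact hef
end RL
end SC

namespace SC
section PA
variable {ι V : Type*} {col : ι → ι → Bool} {G : SimpleGraph V}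

theorem cyc_of_list : ∀ (l : List V), 3 ≤ l.length → l.Nodup → l.IsChain G.Adj →
    (∀ x ∈ l.getLast?, ∀ y ∈ l.head?, G.Adj x y) →
    ∃ (v : V) (c : G.Walk v v), c.IsCycle ∧ c.length = l.length := by
  intro l hl hn hc hcl
  have hne : l ≠ [] := by rintro rfl; simp at hl
  let w := SimpleGraph.Walk.ofSupport l hne hc
  have hs : w.support = l := SimpleGraph.Walk.support_ofSupport hne hc
  have hp : w.IsPath := by rw [SimpleGraph.Walk.isPath_def, hs]; exact hn
  have hlen : w.length = l.length - 1 := SimpleGraph.Walk.length_ofSupport hne hc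
  have hadj : G.Adj (l.getLast hne) (l.head hne) :=
    hcl _ (List.getLast?_eq_getLast_of_ne_nil hne) _ (List.head?_eq_some_head hne)
  refine ⟨_, SimpleGraph.Walk.cons hadj w, ?_, ?_⟩
  · rw [SimpleGraph.Walk.cons_isCycle_iff]
    refine ⟨hp, fun hmem => ?_⟩
    have := hp.length_eq_one_of_mem_edges (by rwa [Sym2.eq_swap] at hmem)
    omega
  · rw [SimpleGraph.Walk.length_cons, hlen]; omega

variable (p : ι → Bool → V)

def blk (x : ι × Bool × Bool) : List V :=
  if x.2.1 = x.2.2 then [p x.1 x.2.1] else [p x.1 x.2.1, p x.1 x.2.2]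

theorem blk_head (x : ι × Bool × Bool) : (blk p x).head? = some (p x.1 x.2.1) := by
  unfold blk; split <;> rfl
theorem blk_last (x : ι × Bool × Bool) : (blk p x).getLast? = some (p x.1 x.2.2) := by
  unfold blk; split
  · next h => simp [h]
  · rfl
theorem blk_len (x : ι × Bool × Bool) : (blk p x).length = wt x := by
  obtain ⟨x, a, b⟩ := x
  cases a <;> cases b <;> rfl
theorem blk_chain (he : ∀ i, G.Adj (p i true) (p i false)) (x : ι × Bool × Bool) :
    (blk p x).IsChain G.Adj := by
  obtain ⟨x, a, b⟩ := x
  cases a <;> cases b <;> simp [blk, he, (he _).symm]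
theorem blk_mem {x : ι × Bool × Bool} {v : V} (h : v ∈ blk p x) : ∃ b, v = p x.1 b := by
  unfold blk at h; split at h
  · simp at h; exact ⟨_, h⟩
  · simp at h; rcases h with h | h <;> exact ⟨_, h⟩

def vl (L : List (ι × Bool × Bool)) : List V := L.flatMap (blk p)

theorem vl_cons (x : ι × Bool × Bool) (L) : vl p (x :: L) = blk p x ++ vl p L := by
  simp [vl]

theorem vl_head (x : ι × Bool × Bool) (L) : (vl p (x :: L)).head? = some (p x.1 x.2.1) := by
  rw [vl_cons, List.head?_append, blk_head]; rfl

theorem vl_last (x : ι × Bool × Bool) (L) :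
    (vl p (L ++ [x])).getLast? = some (p x.1 x.2.2) := by
  simp only [vl, List.flatMap_append, List.getLast?_append]
  simp [blk_last]

theorem vl_len (L : List (ι × Bool × Bool)) : (vl p L).length = (L.map wt).sum := by
  induction L with
  | nil => rfl
  | cons x L ih => rw [vl_cons, List.length_append, blk_len, ih]; simp

theorem vl_chain (he : ∀ i, G.Adj (p i true) (p i false))
    (hl : ∀ i j, i ≠ j → G.Adj (p i (col i j)) (p j (col j i))) :
    ∀ (L : List (ι × Bool × Bool)), (L.map Prod.fst).Nodup → L.IsChain (Rl col) →
      (vl p L).IsChain G.Adj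
  | [], _, _ => by simp [vl]
  | [x], _, _ => by simpa [vl] using blk_chain p he x
  | x :: y :: L, hn, hc => by
    rw [vl_cons, List.isChain_append]
    rw [List.isChain_cons_cons] at hc
    have hn' := hn
    rw [List.map_cons, List.nodup_cons] at hn
    refine ⟨blk_chain p he x, vl_chain he hl _ hn.2 hc.2, ?_⟩
    rw [blk_last, vl_head]
    rintro _ ⟨⟩ _ ⟨⟩
    have : x.1 ≠ y.1 := by
      intro h; apply hn.1; simp [h]
    rw [hc.1.1, hc.1.2]
    exact hl _ _ this

theorem vl_nodup (hp : ∀ i j a b, p i a = p j b → i = j ∧ a = b) :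
    ∀ (L : List (ι × Bool × Bool)), (L.map Prod.fst).Nodup → (vl p L).Nodup
  | [], _ => by simp [vl]
  | x :: L, hn => by
    rw [List.map_cons, List.nodup_cons] at hn
    rw [vl_cons, List.nodup_append]
    refine ⟨?_, vl_nodup hp L hn.2, ?_⟩
    · unfold blk; split
      · simp
      · next h => simp; intro hh; exact h (hp _ _ _ _ hh).2
    · rintro a ha b hb rfl
      obtain ⟨c, rfl⟩ := blk_mem p ha
      simp only [vl, List.mem_flatMap] at hb
      obtain ⟨y, hy, hb⟩ := hb
      obtain ⟨d, hd⟩ := blk_mem p hb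
      apply hn.1
      rw [(hp _ _ _ _ hd).1]
      exact List.mem_map_of_mem hy

theorem cyc_of_good (hp : ∀ i j a b, p i a = p j b → i = j ∧ a = b)
    (he : ∀ i, G.Adj (p i true) (p i false))
    (hl : ∀ i j, i ≠ j → G.Adj (p i (col i j)) (p j (col j i))) {n : ℕ}
    {L : List (ι × Bool × Bool)} (h : Good col n L) :
    ∃ (v : V) (c : G.Walk v v), c.IsCycle ∧ c.length = n := by
  have hlen := h.len
  have hsum : L.length ≤ (vl p L).length := by
    rw [vl_len]
    clear h hlen
    induction L with
    | nil => simp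
    | cons a L ih => simp [wt]; omega
  obtain ⟨v, c, hc, hcl⟩ := cyc_of_list (G := G) (vl p L) (by omega) (vl_nodup p hp L h.nd)
    (by
      apply vl_chain p he hl L h.nd
      match L, h with
      | [], h => simp
      | x :: L, h =>
        have := h.ch
        rw [Cycle.chain_coe_cons, ← List.cons_append, List.isChain_append] at this
        exact this.1)
    (by
      match L, h, hlen with
      | x :: L, h, hlen =>
        rcases List.eq_nil_or_concat L with rfl | ⟨L, y, rfl⟩
        · simp at hlen
        rw [List.concat_eq_append] at h ⊢
        have h1 := (chain_iff _ _ _).1 h.ch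
        rw [vl_head, ← List.cons_append, vl_last]
        rintro _ ⟨⟩ _ ⟨⟩
        rw [h1.2.1, h1.2.2]
        apply hl
        have := h.nd
        intro hxy
        simp [hxy] at this)
  exact ⟨v, c, hc, by rw [hcl, vl_len, h.sm]⟩
end PA
end SC

namespace SC
section BASE
variable {ι : Type*} {col : ι → ι → Bool}

theorem good3 {a b c : ι} (h : [a, b, c].Nodup) :
    Good col (3 + bn (xor (col a c) (col a b)) + bn (xor (col b a) (col b c)) +
      bn (xor (col c b) (col c a)))
      [(a, col a c, col a b), (b, col b a, col b c), (c, col c b, col c a)] where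
  len := by simp
  nd := by simpa using h
  ch := by simp [Rl]
  sm := by simp [wt]; omega

theorem good4 {a b c d : ι} (h : [a, b, c, d].Nodup) :
    Good col (4 + bn (xor (col a d) (col a b)) + bn (xor (col b a) (col b c)) +
      bn (xor (col c b) (col c d)) + bn (xor (col d c) (col d a)))
      [(a, col a d, col a b), (b, col b a, col b c), (c, col c b, col c d),
        (d, col d c, col d a)] where
  len := by simp
  nd := by simpa using h
  ch := by simp [Rl]
  sm := by simp [wt]; omega

theorem good6 {a b c d e f : ι} (h : [a, b, c, d, e, f].Nodup) :
    Good col (6 + bn (xor (col a f) (col a b)) + bn (xor (col b a) (col b c)) +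
      bn (xor (col c b) (col c d)) + bn (xor (col d c) (col d e)) + bn (xor (col e d) (col e f)) +
      bn (xor (col f e) (col f a)))
      [(a, col a f, col a b), (b, col b a, col b c), (c, col c b, col c d),
        (d, col d c, col d e), (e, col e d, col e f), (f, col f e, col f a)] where
  len := by simp
  nd := by simpa using h
  ch := by simp [Rl]
  sm := by simp [wt]; omega

theorem bool4 : ∀ av ab aw va vb bv ba bw wa wb : Bool,
    (3 + bn (xor ab av) + bn (xor va vb) + bn (xor bv ba) ≠ 4 ∧
     3 + bn (xor ab av) + bn (xor va vb) + bn (xor bv ba) ≠ 6 ∧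
     3 + bn (xor aw ab) + bn (xor ba bw) + bn (xor wb wa) ≠ 4 ∧
     3 + bn (xor aw ab) + bn (xor ba bw) + bn (xor wb wa) ≠ 6 ∧
     4 + bn (xor aw av) + bn (xor va vb) + bn (xor bv bw) + bn (xor wb wa) ≠ 6 ∧
     va ≠ vb) → aw ≠ av ∧ bw ≠ bv ∧ wa ≠ wb := by
  decide +kernel

theorem base [Fintype ι] (hc : 6 ≤ Fintype.card ι) :
    (∃ L, Good col 4 L) ∨ ∃ L, Good col 6 L := by
  classical
  by_contra hno
  push Not at hno
  obtain ⟨h4, h6⟩ := hno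
  have key : ∀ a v b w : ι, [a, v, b, w].Nodup → col v a ≠ col v b →
      col a w ≠ col a v ∧ col b w ≠ col b v ∧ col w a ≠ col w b := by
    intro a v b w hn hv
    have hn1 : [a, v, b].Nodup := by simp at hn ⊢; tauto
    have hn2 : [a, b, w].Nodup := by simp at hn ⊢; tauto
    have g1 := good3 (col := col) hn1
    have g2 := good3 (col := col) hn2
    have g3 := good4 (col := col) hn
    refine bool4 (col a v) (col a b) (col a w) (col v a) (col v b) (col b v) (col b a) (col b w)
      (col w a) (col w b) ⟨?_, ?_, ?_, ?_, ?_, hv⟩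
    · intro h; rw [h] at g1; exact h4 _ g1
    · intro h; rw [h] at g1; exact h6 _ g1
    · intro h; rw [h] at g2; exact h4 _ g2
    · intro h; rw [h] at g2; exact h6 _ g2
    · intro h; rw [h] at g3; exact h6 _ g3
  obtain ⟨φ⟩ : Nonempty (Fin 6 ↪ ι) := Function.Embedding.nonempty_of_card_le (by simpa using hc)
  by_cases hmix : ∃ v a b, [a, v, b].Nodup ∧ col v a ≠ col v b
  · obtain ⟨v, a, b, hn, hv⟩ := hmix
    have h2 : 1 < ([a, v, b].toFinset)ᶜ.card := by
      rw [Finset.card_compl]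
      have := List.toFinset_card_le [a, v, b]
      simp only [List.length_cons, List.length_nil] at this
      omega
    obtain ⟨w, hw, u, hu, hwu⟩ := Finset.one_lt_card.1 h2
    simp only [Finset.mem_compl, List.mem_toFinset] at hw hu
    have k1 := key a v b w (by simp at hn hw ⊢; tauto) hv
    have k2 := key a v b u (by simp at hn hu ⊢; tauto) hv
    have g := good4 (col := col) (a := a) (b := w) (c := b) (d := u)
      (by simp at hn hw hu ⊢; grind)
    refine h6 _ (by convert g using 1; revert k1 k2; generalize col a v = p1; generalize col a w = p2
                    generalize col b w = p3; generalize col b v = p4; generalize col w a = p5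
                    generalize col w b = p6; generalize col a u = p7; generalize col b u = p8
                    generalize col u a = p9; generalize col u b = p10
                    revert p1 p2 p3 p4 p5 p6 p7 p8 p9 p10; decide +kernel)
  · push Not at hmix
    have hd : ∀ i j : Fin 6, i ≠ j → φ i ≠ φ j := fun i j h h' => h (φ.injective h')
    have hh : ∀ i j k : Fin 6, [i, j, k].Nodup → bn (xor (col (φ j) (φ i)) (col (φ j) (φ k))) = 0 := by
      intro i j k h
      rw [hmix (φ j) (φ i) (φ k) (by simpa using h.map φ.injective)]
      simp [bn]
    have g := good6 (col := col) (a := φ 0) (b := φ 1) (c := φ 2) (d := φ 3) (e := φ 4) (f := φ 5)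
      (by simp)
    rw [hh 5 0 1 (by decide), hh 0 1 2 (by decide), hh 1 2 3 (by decide), hh 2 3 4 (by decide),
      hh 3 4 5 (by decide), hh 4 5 0 (by decide)] at g
    exact h6 _ g

theorem exists_good [Fintype ι] : ∀ (k : ℕ), 3 ≤ k → 2 * k ≤ Fintype.card ι →
    ∃ L, Good col (2 * k) L := by
  intro k hk
  induction k, hk using Nat.le_induction with
  | base =>
    intro h
    rcases base (col := col) h with h1 | h1
    · exact step (by norm_num) h h1
    · exact h1
  | succ k hk ih =>
    intro h
    exact step (n := 2 * k) (by omega) (by omega) (ih (by omega))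

variable {V : Type*} {G : SimpleGraph V}

/-- key lemma: no big matchings in strong cliques -/
theorem no_matching [Fintype ι] (k : ℕ) (hk : 3 ≤ k) (hG : ∀ (v : V) (c : G.Walk v v), c.IsCycle → c.length ≠ 2 * k)
    (p : ι → Bool → V) (hp : ∀ i j a b, p i a = p j b → i = j ∧ a = b)
    (he : ∀ i, G.Adj (p i true) (p i false))
    (hl : ∀ i j, i ≠ j → ∃ a b, G.Adj (p i a) (p j b)) : Fintype.card ι < 2 * k := by
  classical
  by_contra hlt
  push Not at hlt
  have hcol : ∃ col : ι → ι → Bool, ∀ i j, i ≠ j → G.Adj (p i (col i j)) (p j (col j i)) := by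
    let o : LinearOrder ι := LinearOrder.lift' (Fintype.equivFin ι) (Fintype.equivFin ι).injective
    choose! A B hAB using hl
    refine ⟨fun i j => if i < j then A i j else B j i, fun i j hij => ?_⟩
    rcases lt_or_gt_of_ne hij with h | h
    · simp only [h, if_true, if_neg (not_lt_of_gt h)]
      exact hAB i j hij
    · simp only [h, if_true, if_neg (not_lt_of_gt h)]
      exact (hAB j i hij.symm).symm
  obtain ⟨col, hcol⟩ := hcol
  obtain ⟨L, hL⟩ := exists_good (col := col) k hk hlt
  obtain ⟨v, c, hc, hlen⟩ := cyc_of_good p hp he hcol hL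
  exact hG v c hc hlen
end BASE
end SC

namespace SC
section Q
variable {V : Type*} (H : SimpleGraph V)

/-- a matching, as an involution whose moved points are joined to their images -/
def IsM (μ : V → V) : Prop := (∀ v, μ (μ v) = v) ∧ ∀ v, μ v ≠ v → H.Adj v (μ v)

variable [Fintype V] [DecidableEq V]

def msz (μ : V → V) : ℕ := (Finset.univ.filter fun v => μ v ≠ v).card

def IsMax (μ : V → V) : Prop := IsM H μ ∧ ∀ μ', IsM H μ' → msz μ' ≤ msz μ

theorem exists_max : ∃ μ, IsMax H μ := by
  classical
  have hne : (Finset.univ.filter fun μ : V → V => IsM H μ).Nonempty :=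
    ⟨id, Finset.mem_filter.2 ⟨Finset.mem_univ _, fun _ => rfl, fun _ h => absurd rfl h⟩⟩
  obtain ⟨μ, hμ, h⟩ := Finset.exists_max_image _ msz hne
  simp only [Finset.mem_filter, Finset.mem_univ, true_and] at hμ h
  exact ⟨μ, hμ, h⟩

variable {H}

theorem indepU {μ : V → V} (hμ : IsMax H μ) {x y : V} (hx : μ x = x) (hy : μ y = y) :
    ¬ H.Adj x y := by
  intro hxy
  have hne := hxy.ne
  let μ' : V → V := fun v => if v = x then y else if v = y then x else μ v
  have h1 : IsM H μ' := by
    have := hμ.1.1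
    have := hμ.1.2
    have := hxy.symm
    constructor
    · intro v; simp only [μ']; grind
    · intro v; simp only [μ']; grind
  have h2 := hμ.2 μ' h1
  have h3 : msz μ < msz μ' := by
    apply Finset.card_lt_card
    rw [Finset.ssubset_iff_of_subset]
    · exact ⟨x, by simp [μ', hne.symm], by simp [hx]⟩
    · intro v; simp only [Finset.mem_filter, Finset.mem_univ, true_and, μ']; grind
  omega

/-- exchanging an edge of a maximum matching -/
theorem exch {μ : V → V} (hμ : IsMax H μ) {u a : V} (hu : μ u = u) (h : H.Adj u a) :
    ∃ μ', IsMax H μ' ∧ μ' (μ a) = μ a ∧ ∀ v, v ≠ u → v ≠ a → v ≠ μ a → μ' v = μ v := by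
  have hne := h.ne
  have ha : μ a ≠ a := fun ha => indepU hμ hu ha h
  have hinv := hμ.1.1
  have hadj := hμ.1.2
  let μ' : V → V := fun v => if v = u then a else if v = a then u else if v = μ a then v else μ v
  have h1 : IsM H μ' := by
    have := h.symm
    constructor
    · intro v; simp only [μ']; grind
    · intro v; simp only [μ']; grind
  have hs : msz μ' = msz μ := by
    have hua : u ≠ μ a := by grind
    have e1 : (Finset.univ.filter fun v => μ' v ≠ v) =
        insert u ((Finset.univ.filter fun v => μ v ≠ v).erase (μ a)) := by
      ext v; simp only [Finset.mem_filter, Finset.mem_univ, true_and, μ', Finset.mem_insert,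
        Finset.mem_erase]; grind
    unfold msz
    rw [e1, Finset.card_insert_of_notMem (by simp [hu]), Finset.card_erase_of_mem (by simp; grind)]
    have : 0 < (Finset.univ.filter fun v => μ v ≠ v).card := Finset.card_pos.2 ⟨a, by simp [ha]⟩
    omega
  refine ⟨μ', ⟨h1, fun ν hν => hs ▸ hμ.2 ν hν⟩, ?_, ?_⟩
  · simp only [μ']; grind
  · intro v h1 h2 h3; simp [μ', h1, h2, h3]

open Classical in
noncomputable def uN (H : SimpleGraph V) (μ : V → V) (x : V) : Finset V :=
  Finset.univ.filter fun y => H.Adj x y ∧ μ y = y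

def inA (H : SimpleGraph V) (μ : V → V) (x : V) : Prop := μ x ≠ x ∧ 2 ≤ (uN H μ x).card
def inB (H : SimpleGraph V) (μ : V → V) (x : V) : Prop := inA H μ (μ x)

theorem pick {μ : V → V} {x : V} (h : inA H μ x) (u : V) :
    ∃ w, w ≠ u ∧ μ w = w ∧ H.Adj w x := by
  obtain ⟨w, hw, hne⟩ := Finset.exists_mem_ne (s := uN H μ x) (by have := h.2; omega) u
  simp [uN] at hw
  exact ⟨w, hne, hw.2, hw.1.symm⟩

theorem F1 {μ : V → V} (hμ : IsMax H μ) {x y : V} (hx : inB H μ x) (h : H.Adj x y) : μ y ≠ y := by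
  intro hy
  obtain ⟨w, hwy, hw, hwx⟩ := pick hx y
  obtain ⟨μ', hm, h1, h2⟩ := exch hμ hw hwx
  have hinv := hμ.1.1
  rw [hinv] at h1 h2
  refine indepU hm h1 ?_ h
  rw [h2 y hwy.symm ?_ h.ne.symm, hy]
  intro hyx
  have := hx.1
  grind

/-- common form of the second and third augmentations -/
theorem F23 {μ : V → V} (hμ : IsMax H μ) {u c b : V} (hu : μ u = u) (huc : H.Adj u c)
    (hb : inB H μ b) (h : H.Adj (μ c) b) : False := by
  have hinv := hμ.1.1
  obtain ⟨w, hwu, hw, hwb⟩ := pick hb u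
  have hc : μ c ≠ c := fun hc => indepU hμ hu hc huc
  have hbb : μ b ≠ b := by have := hb.1; grind
  have hcb : c ≠ b := by
    rintro rfl
    exact F1 hμ hb huc.symm hu
  have hcb' : μ c ≠ b := h.ne
  obtain ⟨μ', hm, h1, h2⟩ := exch hμ hu huc
  have hw' : μ' w = w := by rw [h2 w hwu]; exact hw; grind; grind
  have hab : μ' (μ b) = b := by rw [h2 (μ b)]; exact hinv b; grind; grind; grind
  obtain ⟨ν, hm2, h3, h4⟩ := exch hm hw' hwb
  rw [hab] at h3 h4
  refine indepU hm2 ?_ h3 h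
  rw [h4 (μ c) ?_ ?_ hcb', h1]
  · grind
  · grind

theorem F2 {μ : V → V} (hμ : IsMax H μ) {x y : V} (hx : inB H μ x) (hy : inB H μ y) :
    ¬ H.Adj x y := by
  intro h
  obtain ⟨w, -, hw, hwx⟩ := pick hx x
  exact F23 hμ hw hwx hy (by rwa [hμ.1.1])

theorem F4 {μ : V → V} (hμ : IsMax H μ) {c b b' : V} (hb : inB H μ b) (hb' : inB H μ b')
    (h : H.Adj c b) (h' : H.Adj (μ c) b') : b = b' := by
  by_contra hne
  have hinv := hμ.1.1
  obtain ⟨w, -, hw, hwb⟩ := pick hb b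
  obtain ⟨w', hww', hw', hwb'⟩ := pick hb' w
  have hbm : μ b ≠ b := by have := hb.1; grind
  have hbm' : μ b' ≠ b' := by have := hb'.1; grind
  have hcm : μ c ≠ c := fun hc => F1 hμ hb h.symm hc
  have e1 : c ≠ b := h.ne
  have e2 : μ c ≠ b' := h'.ne
  have e3 : c ≠ b' := by rintro rfl; exact F2 hμ hb' hb h
  have e4 : μ c ≠ b := by rintro rfl; exact F2 hμ hb hb' h'
  have e5 : μ b' ≠ b := by
    intro hh
    obtain ⟨z, -, hz, hzb⟩ := pick hb' b
    rw [hh] at hzb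
    exact F1 hμ hb hzb.symm hz
  have e6 : μ b ≠ b' := by
    intro hh
    exact e5 (by rw [← hh, hinv])
  -- first exchange
  obtain ⟨μ1, hm1, h1, h1'⟩ := exch hμ hw hwb
  rw [hinv] at h1 h1'
  have k1 : μ1 c = μ c := by apply h1' <;> grind
  have k2 : μ1 w' = w' := by rw [h1' w']; exact hw'; grind; grind; grind
  have k3 : μ1 (μ b') = b' := by rw [h1' (μ b')]; exact hinv b'; grind; grind; grind
  -- second exchange
  obtain ⟨μ2, hm2, h2, h2'⟩ := exch hm1 h1 h.symm
  rw [k1] at h2 h2'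
  have k4 : μ2 w' = w' := by rw [h2' w']; exact k2; grind; grind; grind
  have k5 : μ2 (μ b') = b' := by rw [h2' (μ b')]; exact k3; grind; grind; grind
  -- third exchange
  obtain ⟨μ3, hm3, h3, h3'⟩ := exch hm2 k4 hwb'
  rw [k5] at h3 h3'
  refine indepU hm3 ?_ h3 h'
  rw [h3' (μ c) ?_ ?_ e2, h2]
  · grind
  · grind

open Classical in
/-- six times the payment of `x` for the edge `xy` -/
noncomputable def chg (H : SimpleGraph V) (μ : V → V) (x y : V) : ℕ :=
  if μ y = y then 6 else if μ x = x then 0 else if inB H μ x then 2 else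
    if inB H μ y then 4 else 3

theorem chg_ge {μ : V → V} (hμ : IsMax H μ) {x y : V} (h : H.Adj x y) :
    6 ≤ chg H μ x y + chg H μ y x := by
  have := @F2 V H _ _ μ hμ x y
  unfold chg
  split_ifs <;> first | omega | (exfalso; tauto)

open Classical in
noncomputable def pay (H : SimpleGraph V) (μ : V → V) (x : V) : ℕ :=
  ∑ y ∈ H.neighborFinset x, chg H μ x y

open Classical in
theorem pay_U {μ : V → V} (hμ : IsMax H μ) {x : V} (hx : μ x = x) : pay H μ x = 0 := by
  apply Finset.sum_eq_zero
  intro y hy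
  rw [SimpleGraph.mem_neighborFinset] at hy
  have : μ y ≠ y := fun h => indepU hμ hx h hy
  simp [chg, this, hx]

open Classical in
theorem pay_le {μ : V → V} (D : ℕ) (hD : ∀ v, H.degree v ≤ D) (x : V) : pay H μ x ≤ 6 * D := by
  calc pay H μ x ≤ ∑ y ∈ H.neighborFinset x, 6 := by
        apply Finset.sum_le_sum; intro y _; unfold chg; split_ifs <;> omega
    _ = H.degree x * 6 := by simp
    _ ≤ 6 * D := by have := hD x; omega

open Classical in
theorem pay_B {μ : V → V} (hμ : IsMax H μ) (D : ℕ) (hD : ∀ v, H.degree v ≤ D) {x : V}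
    (hx : inB H μ x) : pay H μ x ≤ 2 * D := by
  have hxm : μ x ≠ x := by have := hx.1; have := hμ.1.1; grind
  calc pay H μ x ≤ ∑ y ∈ H.neighborFinset x, 2 := by
        apply Finset.sum_le_sum; intro y hy
        rw [SimpleGraph.mem_neighborFinset] at hy
        have := F1 hμ hx hy
        simp [chg, this, hxm, hx]
    _ = H.degree x * 2 := by simp
    _ ≤ 2 * D := by have := hD x; omega

open Classical in
noncomputable def bN (H : SimpleGraph V) (μ : V → V) (x : V) : Finset V :=
  Finset.univ.filter fun y => H.Adj x y ∧ inB H μ y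

open Classical in
theorem pay_C {μ : V → V} {x : V} (hxm : μ x ≠ x)
    (hx : ¬ inB H μ x) : pay H μ x ≤ 3 * H.degree x + 3 * (uN H μ x).card + (bN H μ x).card := by
  have e1 : (uN H μ x).card = ∑ y ∈ H.neighborFinset x, if μ y = y then 1 else 0 := by
    rw [← Finset.card_filter]; congr 1; ext y; simp [uN]
  have e2 : (bN H μ x).card = ∑ y ∈ H.neighborFinset x, if inB H μ y then 1 else 0 := by
    rw [← Finset.card_filter]; congr 1; ext y; simp [bN]
  have e3 : H.degree x = ∑ y ∈ H.neighborFinset x, 1 := by simp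
  rw [e1, e2, e3, Finset.mul_sum, Finset.mul_sum, ← Finset.sum_add_distrib,
    ← Finset.sum_add_distrib]
  apply Finset.sum_le_sum
  intro y _
  unfold chg
  split_ifs <;> omega

open Classical in
theorem deg_C {μ : V → V} (hμ : IsMax H μ) {x : V} (hxm : μ x ≠ x)
    (hx : ¬ inA H μ x) : (uN H μ x).card + (bN H μ x).card + 1 ≤ H.degree x := by
  have hinv := hμ.1.1
  have d1 : Disjoint (uN H μ x) (bN H μ x) := by
    rw [Finset.disjoint_left]
    intro y hy hy'
    simp [uN, bN] at hy hy'
    have := hy'.2.1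
    grind
  have d2 : μ x ∉ uN H μ x ∪ bN H μ x := by
    intro hmem
    simp only [uN, bN, Finset.mem_union, Finset.mem_filter, Finset.mem_univ, true_and,
      hinv] at hmem
    rcases hmem with hmem | hmem
    · exact hxm hmem.2.symm
    · have h5 := hmem.2
      rw [inB, hinv] at h5
      exact hx h5
  rw [← Finset.card_union_of_disjoint d1, ← Finset.card_insert_of_notMem d2,
    ← SimpleGraph.card_neighborFinset_eq_degree]
  apply Finset.card_le_card
  intro y hy
  rw [SimpleGraph.mem_neighborFinset]
  simp [uN, bN] at hy
  rcases hy with rfl | hy | hy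
  · exact hμ.1.2 x hxm
  · exact hy.1
  · exact hy.1

open Classical in
theorem pay_pair {μ : V → V} (hμ : IsMax H μ) (D : ℕ) (hD : ∀ v, H.degree v ≤ D) {x : V}
    (hxm : μ x ≠ x) : pay H μ x + pay H μ (μ x) ≤ 8 * D + 2 := by
  have hinv := hμ.1.1
  by_cases hA : inA H μ x
  · have := pay_B hμ D hD (x := μ x) (by rwa [inB, hinv])
    have := pay_le (μ := μ) D hD x
    omega
  by_cases hB : inB H μ x
  · have := pay_B hμ D hD hB
    have := pay_le (μ := μ) D hD (μ x)
    omega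
  have hxm' : μ (μ x) ≠ μ x := by rw [hinv]; exact hxm.symm
  have hB' : ¬ inB H μ (μ x) := by rwa [inB, hinv]
  have hA' : ¬ inA H μ (μ x) := hB
  have p1 := pay_C hxm hB
  have p2 := pay_C hxm' hB'
  have q1 := deg_C hμ hxm hA
  have q2 := deg_C hμ hxm' hA'
  have r1 := hD x
  have r2 := hD (μ x)
  have s1 : (uN H μ x).card ≤ 1 := by
    by_contra h; exact hA ⟨hxm, by omega⟩
  have s2 : (uN H μ (μ x)).card ≤ 1 := by
    by_contra h; exact hA' ⟨hxm', by omega⟩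
  have t1 : (uN H μ x).card = 0 ∨ (bN H μ (μ x)).card = 0 := by
    by_contra! h
    obtain ⟨u, hu⟩ := Finset.card_ne_zero.1 h.1
    obtain ⟨b, hb⟩ := Finset.card_ne_zero.1 h.2
    simp [uN, bN] at hu hb
    exact F23 hμ hu.2 hu.1.symm hb.2 hb.1
  have t2 : (uN H μ (μ x)).card = 0 ∨ (bN H μ x).card = 0 := by
    by_contra! h
    obtain ⟨u, hu⟩ := Finset.card_ne_zero.1 h.1
    obtain ⟨b, hb⟩ := Finset.card_ne_zero.1 h.2
    simp [uN, bN] at hu hb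
    exact F23 hμ hu.2 hu.1.symm hb.2 (by rw [hinv]; exact hb.1)
  have v1 : (bN H μ (μ x)).card = 0 ∨ (bN H μ x).card ≤ 1 := by
    by_contra! h
    obtain ⟨b, hb⟩ := Finset.card_ne_zero.1 h.1
    obtain ⟨c, hc, d, hd, hcd⟩ := Finset.one_lt_card.1 h.2
    simp [bN] at hb hc hd
    exact hcd ((F4 hμ hc.2 hb.2 hc.1 hb.1).trans (F4 hμ hd.2 hb.2 hd.1 hb.1).symm)
  have v2 : (bN H μ x).card = 0 ∨ (bN H μ (μ x)).card ≤ 1 := by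
    by_contra! h
    obtain ⟨b, hb⟩ := Finset.card_ne_zero.1 h.1
    obtain ⟨c, hc, d, hd, hcd⟩ := Finset.one_lt_card.1 h.2
    simp [bN] at hb hc hd
    exact hcd ((F4 hμ hb.2 hc.2 hb.1 hc.1).symm.trans (F4 hμ hb.2 hd.2 hb.1 hd.1))
  omega

open Classical in
theorem total {μ : V → V} (hμ : IsMax H μ) (D : ℕ) (hD : ∀ v, H.degree v ≤ D) :
    12 * H.edgeFinset.card ≤ msz μ * (8 * D + 2) := by
  have hinv := hμ.1.1
  let f : V → V → ℕ := fun x y => if H.Adj x y then chg H μ x y else 0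
  have hpay : ∀ x, pay H μ x = ∑ y, f x y := by
    intro x
    rw [pay, ← Finset.sum_filter]
    apply Finset.sum_congr _ (fun _ _ => rfl)
    ext y; simp
  have h1 : 6 * ∑ v, H.degree v ≤ 2 * ∑ x, pay H μ x := by
    have e1 : ∑ x, pay H μ x = ∑ x, ∑ y, f x y := Finset.sum_congr rfl fun x _ => hpay x
    have e2 : ∑ x, ∑ y, f x y = ∑ x, ∑ y, f y x := Finset.sum_comm
    have e3 : 2 * ∑ x, pay H μ x = ∑ x, ∑ y, (f x y + f y x) := by
      simp only [Finset.sum_add_distrib]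
      rw [← e2, ← e1]; ring
    rw [e3, Finset.mul_sum]
    apply Finset.sum_le_sum
    intro x _
    have : H.degree x = ∑ y, if H.Adj x y then 1 else 0 := by
      rw [← SimpleGraph.card_neighborFinset_eq_degree, ← Finset.card_filter]
      congr 1; ext y; simp
    rw [this, Finset.mul_sum]
    apply Finset.sum_le_sum
    intro y _
    by_cases h : H.Adj x y
    · have := chg_ge hμ h
      simp [f, h, h.symm, this]
    · simp [h]
  have h2 : 2 * ∑ x, pay H μ x ≤ msz μ * (8 * D + 2) := by
    have e0 : ∑ x, pay H μ x = ∑ x, pay H μ (μ x) :=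
      (Equiv.sum_comp (Function.Involutive.toPerm μ hinv) (pay H μ)).symm
    have e1 : 2 * ∑ x, pay H μ x = ∑ x, (pay H μ x + pay H μ (μ x)) := by
      rw [Finset.sum_add_distrib, ← e0]; ring
    rw [e1, msz, ← smul_eq_mul, ← Finset.sum_const, Finset.sum_filter]
    apply Finset.sum_le_sum
    intro x _
    split_ifs with h
    · exact pay_pair hμ D hD h
    · push Not at h
      rw [h, pay_U hμ h]; simp
  have h3 := H.sum_degrees_eq_twice_card_edges
  omega
end Q
end SC

namespace SC
theorem final {V : Type*} [Fintype V] [DecidableEq V] (G : SimpleGraph V)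
    [DecidableRel G.Adj] (k : ℕ) (hk : 3 ≤ k)
    (hG : ∀ (v : V) (c : G.Walk v v), c.IsCycle → c.length ≠ 2 * k)
    (S : Finset (Sym2 V)) (hS : (S : Set (Sym2 V)) ⊆ G.edgeSet)
    (hS2 : ∀ e ∈ S, ∀ f ∈ S, ∃ a b, a ∈ e ∧ b ∈ f ∧ (a = b ∨ G.Adj a b)) :
    3 * S.card + (4 * G.maxDegree + 1) ≤ 2 * k * (4 * G.maxDegree + 1) := by
  classical
  obtain ⟨H, hH⟩ : ∃ H : SimpleGraph V, H = SimpleGraph.fromEdgeSet (S : Set (Sym2 V)) := ⟨_, rfl⟩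
  have hadj : ∀ x y, H.Adj x y → s(x, y) ∈ S := by
    intro x y h
    rw [hH, SimpleGraph.fromEdgeSet_adj] at h
    exact_mod_cast h.1
  have hHG : H ≤ G := by
    intro x y h
    exact hS (hadj x y h)
  have hcard : S.card ≤ H.edgeFinset.card := by
    apply Finset.card_le_card
    intro e he
    rw [SimpleGraph.mem_edgeFinset]
    have h1 := hS he
    induction e with
    | h x y =>
      rw [SimpleGraph.mem_edgeSet] at h1 ⊢
      rw [hH, SimpleGraph.fromEdgeSet_adj]
      exact ⟨he, h1.ne⟩
  have hD : ∀ v, H.degree v ≤ G.maxDegree := by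
    intro v
    refine le_trans ?_ (G.degree_le_maxDegree v)
    rw [← SimpleGraph.card_neighborFinset_eq_degree, ← SimpleGraph.card_neighborFinset_eq_degree]
    apply Finset.card_le_card
    intro y hy
    rw [SimpleGraph.mem_neighborFinset] at hy ⊢
    exact hHG hy
  obtain ⟨μ, hμ⟩ := exists_max H
  have hinv := hμ.1.1
  have htot := total hμ G.maxDegree (fun v => by convert hD v)
  let o := Fintype.equivFin V
  let p : {x : V // o x < o (μ x)} → Bool → V := fun x b => if b then x.1 else μ x.1
  have hm : Fintype.card {x : V // o x < o (μ x)} < 2 * k := by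
    have hp : ∀ i j a b, p i a = p j b → i = j ∧ a = b := by
      rintro ⟨x, hx⟩ ⟨y, hy⟩ a b h
      cases a <;> cases b <;> simp [p] at h ⊢
      · rw [← hinv x, h, hinv]
      · subst h; rw [hinv] at hy; exact absurd hx (not_lt.2 hy.le)
      · subst h; rw [hinv] at hx; exact absurd hx (not_lt.2 hy.le)
      · exact h
    have hmv : ∀ x : {x : V // o x < o (μ x)}, H.Adj x.1 (μ x.1) := by
      intro x
      apply hμ.1.2
      intro h
      have := x.2
      rw [h] at this
      exact lt_irrefl _ this
    refine no_matching k hk hG p hp ?_ ?_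
    · intro i
      exact hHG (hmv i)
    · intro i j hij
      obtain ⟨a, b, ha, hb, hab⟩ := hS2 _ (hadj _ _ (hmv i)) _ (hadj _ _ (hmv j))
      have fa : ∃ a', a = p i a' := by
        rcases Sym2.mem_iff.1 ha with h | h
        · exact ⟨true, by simp [p, h]⟩
        · exact ⟨false, by simp [p, h]⟩
      have fb : ∃ b', b = p j b' := by
        rcases Sym2.mem_iff.1 hb with h | h
        · exact ⟨true, by simp [p, h]⟩
        · exact ⟨false, by simp [p, h]⟩
      obtain ⟨a', rfl⟩ := fa
      obtain ⟨b', rfl⟩ := fb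
      rcases hab with h | h
      · exact absurd (hp _ _ _ _ h).1 hij
      · exact ⟨_, _, h⟩
  have hms : msz μ = 2 * Fintype.card {x : V // o x < o (μ x)} := by
    rw [Fintype.card_subtype]
    have e1 : (Finset.univ.filter fun x => o (μ x) < o x).card =
        (Finset.univ.filter fun x => o x < o (μ x)).card := by
      apply Finset.card_bij' (fun x _ => μ x) (fun x _ => μ x)
      · intro x hx; simp only [Finset.mem_filter, Finset.mem_univ, true_and, hinv] at hx ⊢; exact hx
      · intro x hx; simp only [Finset.mem_filter, Finset.mem_univ, true_and, hinv] at hx ⊢; exact hx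
      · intro x _; exact hinv x
      · intro x _; exact hinv x
    have e2 : (Finset.univ.filter fun x => μ x ≠ x) =
        (Finset.univ.filter fun x => o x < o (μ x)) ∪ (Finset.univ.filter fun x => o (μ x) < o x) := by
      ext x
      simp only [Finset.mem_filter, Finset.mem_univ, true_and, Finset.mem_union]
      constructor
      · intro h
        exact lt_or_gt_of_ne (fun h' => h (o.injective h').symm)
      · rintro (h | h) h'
        · rw [h'] at h; exact lt_irrefl _ h
        · rw [h'] at h; exact lt_irrefl _ h
    have e3 : Disjoint (Finset.univ.filter fun x => o x < o (μ x))
        (Finset.univ.filter fun x => o (μ x) < o x) := by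
      rw [Finset.disjoint_left]
      intro x h1 h2
      simp only [Finset.mem_filter, Finset.mem_univ, true_and] at h1 h2
      exact lt_asymm h1 h2
    rw [msz, e2, Finset.card_union_of_disjoint e3, e1]; ring
  rw [hms] at htot
  have hcard' : 12 * S.card ≤ 2 * Fintype.card {x : V // o x < o (μ x)} * (8 * G.maxDegree + 2) := by
    refine le_trans ?_ htot
    have : S.card ≤ H.edgeFinset.card := hcard
    convert Nat.mul_le_mul_left 12 this
  nlinarith [Nat.mul_le_mul_right (4 * G.maxDegree + 1) (Nat.succ_le_of_lt hm)]
end SC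

/-- For `k ≥ 3`, if `G` is a `C₂ₖ`-free graph with `Δ(G) ≥ 1`, then the strong clique
number of `G` is at most `(2k - 1)(4Δ(G) + 1) / 3`. -/
theorem stmt19 {V : Type*} [Fintype V] [DecidableEq V] (G : SimpleGraph V)
    [DecidableRel G.Adj] (k : ℕ) (hk : 3 ≤ k)
    (hc2k : CycleFree G (2 * k)) (hΔ : 1 ≤ G.maxDegree)
    (S : Finset (Sym2 V)) (hS : IsStrongClique G ↑S) :
    (S.card : ℚ) ≤ (2 * k - 1) * (4 * G.maxDegree + 1) / 3 := by
  have h := SC.final G k hk hc2k S hS.1 hS.2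
  have h' : (3 * (S.card : ℚ) + (4 * G.maxDegree + 1)) ≤ 2 * k * (4 * G.maxDegree + 1) := by
    exact_mod_cast h
  rw [le_div_iff₀ (by norm_num)]
  linarith
end
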